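/- Let α be a partition with all parts at least 2 and overlapping partition p. Then the Schur support [R_α^p] is a proper subset of the Schur interval [α, (|α|−p_1, p_1)] if and only if ℓ(p) ≥ 2 and, for some 1 ≤ i ≤ ℓ(p)−1, the i-witness vector g̃^i fits its slack, i.e. Σ_{j=1}^i max(0, ϱ_i − α_j) ≤ p_{i+1} − 1. In that case α_j + g̃^i_j ≥ ϱ_i ≥ p_{i+1} − 1 − |g̃^i| for j = 1,…,i, and the weakly decreasing rearrangement of (α_1+g̃^i_1, …, α_i+g̃^i_i, ϱ_i, p_{i+1}−1−|g̃^i|) is a partition of |α| lying in [α, (|α|−p_1, p_1)] but not in [R_α^p]. -/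

import Mathlib

namespace RibbonSupport

/-- A partition: a weakly decreasing list of positive integers. -/
def IsPartition (a : List ℕ) : Prop := a.Pairwise (· ≥ ·) ∧ ∀ x ∈ a, 0 < x

/-- All parts of the list are at least `m`. -/
def PartsGE (a : List ℕ) (m : ℕ) : Prop := ∀ x ∈ a, m ≤ x

/-- Dominance order `lam ⪯ mu` on partitions of the same size. -/
def DomLE (lam mu : List ℕ) : Prop :=
  lam.sum = mu.sum ∧ ∀ i, (lam.take i).sum ≤ (mu.take i).sum

/-- The number of nonzero parts. -/
def lenp (p : List ℕ) : ℕ := p.countP (fun x => decide (x ≠ 0))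

/-- `p` is an overlapping partition for the monotone ribbon with row lengths `a`:
`p` has the same length as `a`, its last entry is `0`, and consecutive entries
decrease by `0` or `1`. -/
def IsOverlapSeq (a p : List ℕ) : Prop :=
  p.length = a.length ∧ p.getD (a.length - 1) 0 = 0 ∧
    ∀ i, i + 1 < a.length →
      p.getD i 0 = p.getD (i + 1) 0 ∨ p.getD i 0 = p.getD (i + 1) 0 + 1

/-- Rows `i` and `i+1` (0-based, top to bottom) of `R_a^p` overlap
(share exactly one column) exactly when `p_i = p_{i+1} + 1`. -/
def ovOf (p : List ℕ) : ℕ → Bool := fun i => decide (p.getD i 0 = p.getD (i + 1) 0 + 1)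

def rowOffset (a : List ℕ) (i : ℕ) : ℕ := (a.take i).sum

/-- `w` is the reading word (rows right-to-left, top to bottom) of a semistandard filling of
the ribbon with row lengths `a` (top to bottom) in which consecutive rows `i`, `i+1` share
exactly one column when `ov i = true` and no column otherwise.  Semistandardness amounts to:
within each row block the word is weakly decreasing (rows weakly increase left to right), and
at each overlapping gap the word strictly increases (columns strictly increase downwards). -/
def IsRibbonWord (a : List ℕ) (ov : ℕ → Bool) (w : List ℕ) : Prop :=
  w.length = a.sum ∧
  (∀ i j, i < a.length → j + 1 < a.getD i 0 →
    w.getD (rowOffset a i + j + 1) 0 ≤ w.getD (rowOffset a i + j) 0) ∧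
  (∀ i, i + 1 < a.length → ov i = true →
    w.getD (rowOffset a (i + 1) - 1) 0 < w.getD (rowOffset a (i + 1)) 0)

/-- Yamanouchi (lattice) word: each prefix has at least as many letters `j` as `j+1`. -/
def IsYam (w : List ℕ) : Prop := ∀ k j, (w.take k).count (j + 2) ≤ (w.take k).count (j + 1)

/-- The word `w` has content `nu` (and only positive letters). -/
def HasContent (w : List ℕ) (nu : List ℕ) : Prop :=
  (∀ j, w.count (j + 1) = nu.getD j 0) ∧ w.count 0 = 0

/-- There is an LR filling of the ribbon `(a, ov)` with content `nu`. -/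
def InSupportOv (a : List ℕ) (ov : ℕ → Bool) (nu : List ℕ) : Prop :=
  ∃ w : List ℕ, IsRibbonWord a ov w ∧ IsYam w ∧ HasContent w nu

/-- `nu` is in the Schur support of the monotone ribbon `R_a^p`. -/
def InSupport (a p nu : List ℕ) : Prop := InSupportOv a (ovOf p) nu

/-- `nu` is in the Schur support of the connected ribbon `R_a`. -/
def InSupportConn (a nu : List ℕ) : Prop := InSupportOv a (fun _ => true) nu

/-- `nu` belongs to the Schur interval `[a, (|a| - p₁, p₁)]` in dominance order. -/
def InInterval (a p nu : List ℕ) : Prop :=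
  DomLE a nu ∧ DomLE nu [a.sum - p.getD 0 0, p.getD 0 0]

/-- The Schur support of `R_a^p`, as a set of partitions. -/
def SupportSet (a p : List ℕ) : Set (List ℕ) := {nu | IsPartition nu ∧ InSupport a p nu}

/-- The Schur interval of `R_a^p`, as a set of partitions. -/
def IntervalSet (a p : List ℕ) : Set (List ℕ) := {nu | IsPartition nu ∧ InInterval a p nu}

/-- `R_a^p` has full Schur support. -/
def FullSupport (a p : List ℕ) : Prop := SupportSet a p = IntervalSet a p

/-- The Schur support of the connected ribbon `R_a`, as a set of partitions. -/
def SupportSetConn (a : List ℕ) : Set (List ℕ) := {nu | IsPartition nu ∧ InSupportConn a nu}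

/-- `ϱ_i` (1-based `i`): `Σ_{q=i+1}^{ℓ(a)} a_q − p_{i+1} + 1`. -/
def rho (a p : List ℕ) (i : ℕ) : ℕ := (a.drop i).sum + 1 - p.getD i 0

/-- Entry `j` (1-based) of the `i`-witness vector: `[ϱ_i − a_j]₊`. -/
def wit (a p : List ℕ) (i j : ℕ) : ℕ := rho a p i - a.getD (j - 1) 0

/-- Size of the `i`-witness vector. -/
def witSize (a p : List ℕ) (i : ℕ) : ℕ := ∑ j ∈ Finset.Icc 1 i, wit a p i j

/-! ### Tableaux -/

/-- Cells (0-based `(row, column)`) of the Young diagram of `lam`. -/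
def cells (lam : List ℕ) : Finset (ℕ × ℕ) :=
  (Finset.range lam.length ×ˢ Finset.range (lam.sum + 1)).filter
    (fun x => x.2 < lam.getD x.1 0)

/-- `T` is a semistandard Young tableau of shape `lam` and content `al`
(normalized to vanish off the diagram). -/
def IsTab (lam al : List ℕ) (T : ℕ × ℕ → ℕ) : Prop :=
  (∀ x, x ∉ cells lam → T x = 0) ∧
  (∀ x ∈ cells lam, 1 ≤ T x) ∧
  (∀ i c, (i, c + 1) ∈ cells lam → T (i, c) ≤ T (i, c + 1)) ∧
  (∀ i c, (i + 1, c) ∈ cells lam → T (i, c) < T (i + 1, c)) ∧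
  (∀ k, ((cells lam).filter (fun x => T x = k + 1)).card = al.getD k 0)

/-- Standardization of a tableau: entries are renumbered `1, …, N` in increasing order of
value, entries of equal value being numbered from southwest to northeast (by column). -/
def stdz (lam : List ℕ) (T : ℕ × ℕ → ℕ) : ℕ × ℕ → ℕ := fun x =>
  if x ∈ cells lam then
    ((cells lam).filter (fun y => T y < T x ∨ (T y = T x ∧ y.2 < x.2))).card + 1
  else 0

/-- `n` is a descent of the standard tableau `U`: the entry `n+1` lies in a strictly
lower row than the entry `n`. -/
def IsDescent (lam : List ℕ) (U : ℕ × ℕ → ℕ) (n : ℕ) : Prop :=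
  ∃ x ∈ cells lam, ∃ y ∈ cells lam, U x = n ∧ U y = n + 1 ∧ x.1 < y.1

/-- `S(al)`: the set of proper partial sums of the composition `al`. -/
def Sset (al : List ℕ) : Set ℕ := {n | ∃ k, 0 < k ∧ k < al.length ∧ n = (al.take k).sum}

/-- `s ∈ D(T)`: some entry `s+1` of `T` lies in a strictly lower row than some entry `s`. -/
def TabDescent (lam : List ℕ) (T : ℕ × ℕ → ℕ) (s : ℕ) : Prop :=
  ∃ x ∈ cells lam, ∃ y ∈ cells lam, T x = s ∧ T y = s + 1 ∧ x.1 < y.1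

/-- The word `w_{T̂}` of `T`: its `u`-th letter (1-based) is the 1-based row index of the
entry `u` of the standardization `T̂` of `T`. -/
def wordOf (lam : List ℕ) (T : ℕ × ℕ → ℕ) : List ℕ :=
  (List.range lam.sum).map fun n =>
    ∑ x ∈ (cells lam).filter (fun x => stdz lam T x = n + 1), (x.1 + 1)

/-- `j ∈ {2, …, ℓ(al)}` is a critical number of `T ∈ Tab(lam, al)`:
`w_{α_1+⋯+α_{j-1}} = w_{α_1+⋯+α_{j-1}+1}` in the word of `T`. -/
def CriticalNum (lam al : List ℕ) (T : ℕ × ℕ → ℕ) (j : ℕ) : Prop :=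
  2 ≤ j ∧ j ≤ al.length ∧
    (wordOf lam T).getD ((al.take (j - 1)).sum - 1) 0 =
      (wordOf lam T).getD ((al.take (j - 1)).sum) 0

/-- `j ∈ {2, …, ℓ(al)}` is a negligible critical number of `T`:
`w_{α_1+⋯+α_{j-1}} > w_{α_1+⋯+α_{j-1}+1}` in the word of `T`. -/
def NegligibleNum (lam al : List ℕ) (T : ℕ × ℕ → ℕ) (j : ℕ) : Prop :=
  2 ≤ j ∧ j ≤ al.length ∧
    (wordOf lam T).getD ((al.take (j - 1)).sum) 0 <
      (wordOf lam T).getD ((al.take (j - 1)).sum - 1) 0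

/-- The overlapping partition of the ribbon encoded by its gap pattern `b`
(`b j = true` iff rows `j` and `j+1`, 0-based, overlap). -/
def povOf (b : List Bool) : List ℕ :=
  (List.range (b.length + 1)).map fun i => (b.drop i).count true

/-! ### Connected ribbons with rows in arbitrary order -/

/-- Starting column (0-based) of row `i` of the connected ribbon with row lengths `b`. -/
def startConn (b : List ℕ) (i : ℕ) : ℕ := (b.drop (i + 1)).sum + (i + 1) - b.length

/-- Number of columns of the connected ribbon with row lengths `b`. -/
def ncols (b : List ℕ) : ℕ := b.sum + 1 - b.length

/-- Length of column `c` of the connected ribbon with row lengths `b`. -/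
def colLen (b : List ℕ) (c : ℕ) : ℕ :=
  ((Finset.range b.length).filter
    (fun i => startConn b i ≤ c ∧ c < startConn b i + b.getD i 0)).card

/-- Deletion rank of row `j`: the number of rows deleted strictly before row `j` when one
repeatedly deletes a longest remaining row in highest (most northern) position. -/
def delRank (g : List ℕ) (j : ℕ) : ℕ :=
  ((Finset.range g.length).filter
    (fun j' => g.getD j 0 < g.getD j' 0 ∨ (g.getD j' 0 = g.getD j 0 ∧ j' < j))).card

/-- The overlapping partition of the connected ribbon with row lengths `g`:
its `(d+1)`-st entry is the number of length-two columns of the ribbon remaining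
after deleting `d` rows as above, i.e. the number of adjacent pairs of surviving rows. -/
def ppiList (g : List ℕ) : List ℕ :=
  (List.range g.length).map fun d =>
    ((Finset.range (g.length - 1)).filter
      (fun j => d ≤ delRank g j ∧ d ≤ delRank g (j + 1))).card

/-!
Let `c i` be the number of columns of the ribbon occupied by its rows from the `i`-th (0-based) on.
A partition `ν` of `|a|` lies in the Schur support if and only if `a ⪯ ν` and `ν i ≤ c i` for all
`i`. The interval imposes `a ⪯ ν` and only the bound `ν 0 ≤ c 0`, so the inclusion is proper exactly
when some `ν` in the interval has `ν i ≥ c i + 1 = ϱ_i` for some `i ≥ 1`. Such a `ν` dominates `a`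
and has its first `i + 1` rows of length at least `ϱ_i`; there are enough boxes for this exactly
when the `i`-witness vector fits its slack, and then the cheapest choice is the witness partition.

The column bounds are necessary because a Yamanouchi filling has no letter `i + 1` above the `i`-th
row and at most one in each column. For sufficiency, peeling off the first row of the ribbon yields,
by induction, a Yamanouchi word whose reversal fills the ribbon rotated by 180 degrees. It remains
to find a Yamanouchi word with the same content whose ascents are the descents of that reversal.
Words with ascents in `D` are those cut into weakly decreasing blocks of lengths prescribed by `D`,
and reversing the word reverses these lengths. The number of Yamanouchi words of given content cut
into weakly decreasing blocks is symmetric in the block lengths, by Bender–Knuth toggles. By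
inclusion–exclusion, there are therefore as many Yamanouchi words of that content with a prescribed
set of ascents as there are with that set of descents of the reversal.
-/

/-! ### Words and their contents -/

/-- The content of a word as a sequence: `content w j` is the number of letters `j + 1` of `w`. -/
def content (w : List ℕ) (j : ℕ) : ℕ := w.count (j + 1)

/-- The skew shape `mu / lam` of two sequences of row lengths is a horizontal strip: no column
contains two of its boxes. -/
def IsHorizontalStrip (lam mu : ℕ → ℕ) : Prop := ∀ j, lam j ≤ mu j ∧ mu (j + 1) ≤ lam j

theorem content_append (u v : List ℕ) (j : ℕ) :
    content (u ++ v) j = content u j + content v j :=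
  List.count_append

theorem succ_mem_of_content_lt_content_append {u v : List ℕ} {j : ℕ}
    (h : content u j < content (u ++ v) j) : j + 1 ∈ v := by
  rw [content_append] at h
  exact List.count_pos_iff.1 (Nat.pos_of_lt_add_right h)

theorem content_congr {u v : List ℕ} (h : u.Perm v) : content u = content v :=
  funext fun j => h.count_eq (j + 1)

theorem perm_of_content_eq {u v : List ℕ} (hu : 0 ∉ u) (hv : 0 ∉ v) (h : content u = content v) :
    u.Perm v := by
  refine List.perm_iff_count.2 fun
    | 0 => by rw [List.count_eq_zero.2 hu, List.count_eq_zero.2 hv]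
    | j + 1 => congrFun h j

theorem eq_of_content_eq_of_pairwise_ge {u v : List ℕ} (hu : 0 ∉ u) (hv : 0 ∉ v)
    (hu' : u.Pairwise (· ≥ ·)) (hv' : v.Pairwise (· ≥ ·)) (h : content u = content v) : u = v :=
  (perm_of_content_eq hu hv h).eq_of_pairwise (fun _ _ _ _ h₁ h₂ => le_antisymm h₂ h₁) hu' hv'

theorem exists_forall_content_eq_zero (w : List ℕ) : ∃ M, ∀ j, M ≤ j → content w j = 0 :=
  ⟨w.sum, fun _ hj => List.count_eq_zero.2 fun hmem =>
    absurd (List.le_sum_of_mem hmem) (Nat.lt_succ_of_le hj).not_ge⟩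

theorem length_eq_sum_content {w : List ℕ} {M : ℕ} (h0 : 0 ∉ w)
    (hM : ∀ j, M ≤ j → content w j = 0) : w.length = ∑ j ∈ Finset.range M, content w j := by
  have hletters : ∀ x ∈ (w : Multiset ℕ), x ∈ Finset.range (M + 1) := by
    intro x hx
    cases x with
    | zero => exact absurd hx h0
    | succ j =>
      by_contra hj
      exact List.count_eq_zero.1 (hM j (by simpa using hj)) hx
  have hcard := Multiset.sum_count_eq_card hletters
  simpa [Finset.sum_range_succ', List.count_eq_zero.2 h0, content] using hcard.symm

theorem exists_pairwise_ge_content_eq (f : ℕ → ℕ) (L : ℕ) (hf : ∀ j, L ≤ j → f j = 0) :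
    ∃ x : List ℕ, x.Pairwise (· ≥ ·) ∧ 0 ∉ x ∧ content x = f := by
  set s : Multiset ℕ := ∑ j ∈ Finset.range L, Multiset.replicate (f j) (j + 1) with hs
  refine ⟨s.sort (· ≥ ·), Multiset.pairwise_sort s _, ?_, funext fun j => ?_⟩
  · simp [hs, Multiset.mem_sum, Multiset.mem_replicate]
  · have hcount : content (s.sort (· ≥ ·)) j = s.count (j + 1) := by
      rw [content, ← Multiset.coe_count, Multiset.sort_eq]
    rw [hcount, hs, Multiset.count_sum']
    simp only [Multiset.count_replicate, add_left_inj, Finset.sum_ite_eq', Finset.mem_range]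
    exact ite_eq_left_iff.2 fun hj => (hf j (not_lt.1 hj)).symm

theorem exists_pairwise_ge_content_append_eq {u : List ℕ} {f : ℕ → ℕ} {L : ℕ}
    (hu : ∀ j, content u j ≤ f j) (hf : ∀ j, L ≤ j → f j = 0) :
    ∃ x : List ℕ, x.Pairwise (· ≥ ·) ∧ 0 ∉ x ∧ content (u ++ x) = f := by
  obtain ⟨x, hx, h0, hcont⟩ := exists_pairwise_ge_content_eq (fun j => f j - content u j) L
    fun j hj => Nat.sub_eq_zero_of_le (hf j hj ▸ Nat.zero_le _)
  exact ⟨x, hx, h0, funext fun j => by rw [content_append, hcont, Nat.add_sub_cancel' (hu j)]⟩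

/-! ### Yamanouchi words -/

theorem IsYam.of_append {u v : List ℕ} (h : IsYam (u ++ v)) : IsYam u := by
  intro k j
  have hk := h (min k u.length) j
  rwa [List.take_append_of_le_length (min_le_right _ _), ← List.take_take, List.take_length] at hk

theorem IsYam.content_succ_le {w : List ℕ} (h : IsYam w) (j : ℕ) :
    content w (j + 1) ≤ content w j := by
  have hj := h w.length j
  rwa [List.take_length] at hj

theorem isYam_append_of_isHorizontalStrip {u x : List ℕ} (hu : IsYam u)
    (h : IsHorizontalStrip (content u) (content (u ++ x))) : IsYam (u ++ x) := by
  intro k j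
  rw [List.take_append]
  rcases le_or_gt k u.length with hk | hk
  · simpa [Nat.sub_eq_zero_of_le hk] using hu k j
  · rw [List.take_of_length_le hk.le]
    calc (u ++ x.take (k - u.length)).count (j + 2)
        ≤ (u ++ x).count (j + 2) :=
          ((List.Sublist.refl u).append (List.take_sublist _ _)).count_le _
      _ ≤ u.count (j + 1) := (h j).2
      _ ≤ (u ++ x.take (k - u.length)).count (j + 1) := (List.sublist_append_left _ _).count_le _

-- The letters `j + 2` of a weakly decreasing word precede its letters `j + 1`, so at the last
-- letter `j + 2` the Yamanouchi condition only sees the letters `j + 1` of the prefix `u`.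
theorem IsYam.isHorizontalStrip {u x : List ℕ} (h : IsYam (u ++ x)) (hx : x.Pairwise (· ≥ ·)) :
    IsHorizontalStrip (content u) (content (u ++ x)) := by
  refine fun j => ⟨(List.sublist_append_left u x).count_le _, ?_⟩
  induction x using List.reverseRecOn with
  | nil => simpa only [List.append_nil] using IsYam.content_succ_le (by simpa using h) j
  | append_singleton x y ih =>
    obtain ⟨hx, -, hxy⟩ := List.pairwise_append.1 hx
    rw [← List.append_assoc] at h ⊢
    have ih := ih h.of_append hx
    by_cases hy : y = j + 2
    · have hnone : content x j = 0 := List.count_eq_zero.2 fun hmem => by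
        have := hxy _ hmem y (List.mem_singleton_self y)
        omega
      have hlast := h.content_succ_le j
      have hy0 : content [y] j = 0 := by simp [content, hy]
      simp only [content_append, hnone, hy0] at hlast ⊢
      exact hlast
    · have hy0 : content [y] (j + 1) = 0 := by simp [content, hy]
      rwa [content_append, hy0]

theorem IsYam.append_of_perm {s s' z : List ℕ} (h : IsYam (s ++ z)) (hs' : IsYam s')
    (hp : s'.Perm s) : IsYam (s' ++ z) := by
  intro k j
  have hk' := h k j
  rw [List.take_append] at hk' ⊢
  rcases le_or_gt k s'.length with hk | hk
  · simpa [Nat.sub_eq_zero_of_le hk] using hs' k j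
  · rw [List.take_of_length_le (hp.length_eq ▸ hk.le), List.count_append, List.count_append] at hk'
    rwa [List.take_of_length_le hk.le, List.count_append, List.count_append, hp.count_eq,
      hp.count_eq, hp.length_eq]

/-! ### Words cut into blocks -/

/-- The word `w` is a concatenation of blocks of lengths `c`, each of which is a chain for `R`. -/
def IsBlockChain (R : ℕ → ℕ → Prop) (c w : List ℕ) : Prop :=
  ∃ ws : List (List ℕ), ws.map List.length = c ∧ ws.flatten = w ∧ ∀ x ∈ ws, x.IsChain R

section Blocks

variable {R : ℕ → ℕ → Prop} {c w : List ℕ}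

theorem isBlockChain_nil_iff : IsBlockChain R [] w ↔ w = [] := by
  constructor
  · rintro ⟨ws, hlen, rfl, -⟩
    rw [List.map_eq_nil_iff.1 hlen, List.flatten_nil]
  · rintro rfl
    exact ⟨[], by simp⟩

theorem isBlockChain_cons_iff {a : ℕ} : IsBlockChain R (a :: c) w ↔
    ∃ x z, x.length = a ∧ w = x ++ z ∧ x.IsChain R ∧ IsBlockChain R c z := by
  constructor
  · rintro ⟨_ | ⟨x, ws⟩, hlen, rfl, hR⟩
    · simp at hlen
    · rw [List.map_cons, List.cons.injEq] at hlen
      rw [List.forall_mem_cons] at hR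
      exact ⟨x, ws.flatten, hlen.1, List.flatten_cons, hR.1, ws, hlen.2, rfl, hR.2⟩
  · rintro ⟨x, z, rfl, rfl, hx, ws, rfl, rfl, hR⟩
    exact ⟨x :: ws, List.map_cons, List.flatten_cons, List.forall_mem_cons.2 ⟨hx, hR⟩⟩

theorem IsBlockChain.reverse (h : IsBlockChain R c w) :
    IsBlockChain (fun a b => R b a) c.reverse w.reverse := by
  obtain ⟨ws, rfl, rfl, hR⟩ := h
  refine ⟨(ws.map List.reverse).reverse, ?_, List.reverse_flatten.symm, fun x hx => ?_⟩
  · simp [List.map_reverse, Function.comp_def]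
  · obtain ⟨y, hy, rfl⟩ := List.mem_map.1 (List.mem_reverse.1 hx)
    exact List.isChain_reverse.2 (hR y hy)

theorem isBlockChain_reverse_iff :
    IsBlockChain (fun a b => R b a) c.reverse w.reverse ↔ IsBlockChain R c w :=
  ⟨fun h => by simpa only [List.reverse_reverse] using h.reverse, IsBlockChain.reverse⟩

theorem isBlockChain_one_cons_iff {h : ℕ} :
    IsBlockChain R (1 :: c) (h :: w) ↔ IsBlockChain R c w := by
  rw [isBlockChain_cons_iff]
  constructor
  · rintro ⟨x, z, hx, hw, -, hz⟩
    obtain ⟨y, rfl⟩ := List.length_eq_one_iff.1 hx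
    obtain ⟨-, rfl⟩ := List.cons.inj hw
    exact hz
  · exact fun hw => ⟨[h], w, rfl, rfl, List.isChain_singleton h, hw⟩

theorem isBlockChain_succ_cons_iff {a h g : ℕ} : IsBlockChain R ((a + 2) :: c) (h :: g :: w) ↔
    R h g ∧ IsBlockChain R ((a + 1) :: c) (g :: w) := by
  simp only [isBlockChain_cons_iff]
  constructor
  · rintro ⟨x, z, hx, hw, hchain, hz⟩
    match x, hx with
    | x₁ :: x₂ :: x, hx =>
      simp only [List.cons_append, List.cons.injEq] at hw
      obtain ⟨rfl, rfl, rfl⟩ := hw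
      rw [List.isChain_cons_cons] at hchain
      exact ⟨hchain.1, g :: x, z, by simpa using hx, rfl, hchain.2, hz⟩
  · rintro ⟨hR, x, z, hx, hw, hchain, hz⟩
    match x, hx with
    | x₁ :: x, hx =>
      obtain ⟨rfl, rfl⟩ := List.cons.inj hw
      exact ⟨h :: g :: x, z, by simpa using hx, rfl, List.isChain_cons_cons.2 ⟨hR, hchain⟩, hz⟩

end Blocks

theorem exists_isBlockChain_cons_iff (N : ℕ) (D : Set ℕ) : ∃ a c, ∀ (R : ℕ → ℕ → Prop)
    (w : List ℕ), w.length = N + 1 → (IsBlockChain R ((a + 1) :: c) w ↔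
      ∀ k < N, k ∉ D → R (w.getD k 0) (w.getD (k + 1) 0)) := by
  induction N generalizing D with
  | zero =>
    refine ⟨0, [], fun R w hw => ?_⟩
    obtain ⟨x, rfl⟩ := List.length_eq_one_iff.1 hw
    simp [isBlockChain_one_cons_iff, isBlockChain_nil_iff]
  | succ N ih =>
    obtain ⟨a, c, hc⟩ := ih {k | k + 1 ∈ D}
    by_cases hD : 0 ∈ D
    · refine ⟨0, (a + 1) :: c, fun R w hw => ?_⟩
      obtain ⟨h, w, rfl⟩ := List.exists_cons_of_length_eq_add_one hw
      rw [isBlockChain_one_cons_iff, hc R w (Nat.succ.inj hw), Nat.forall_lt_succ_left']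
      simp [hD]
    · refine ⟨a + 1, c, fun R w hw => ?_⟩
      obtain ⟨h, w, rfl⟩ := List.exists_cons_of_length_eq_add_one hw
      obtain ⟨g, w, rfl⟩ := List.exists_cons_of_length_eq_add_one (Nat.succ.inj hw)
      rw [isBlockChain_succ_cons_iff, hc R (g :: w) (Nat.succ.inj hw), Nat.forall_lt_succ_left']
      simp [hD]

/-- The positions `k` at which the consecutive letters `w_k` and `w_{k+1}` are related by `R`:
the ascents of `w` for `R = (· < ·)` and its descents for `R = (· > ·)`. -/
def relPositions (R : ℕ → ℕ → Prop) [DecidableRel R] (w : List ℕ) : Finset ℕ :=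
  {k ∈ Finset.range (w.length - 1) | R (w.getD k 0) (w.getD (k + 1) 0)}

theorem relPositions_subset_iff {R : ℕ → ℕ → Prop} [DecidableRel R] {w : List ℕ} {D : Finset ℕ} :
    relPositions R w ⊆ D ↔ ∀ k < w.length - 1, k ∉ D → ¬R (w.getD k 0) (w.getD (k + 1) 0) := by
  simp only [relPositions, Finset.subset_iff, Finset.mem_filter, Finset.mem_range, and_imp]
  exact forall₂_congr fun _ _ => not_imp_not.symm

theorem exists_isBlockChain_iff_relPositions_subset (N : ℕ) (D : Finset ℕ) : ∃ c : List ℕ,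
    ∀ (R : ℕ → ℕ → Prop) [DecidableRel R] (w : List ℕ), w.length = N →
      (IsBlockChain (fun a b => ¬R a b) c w ↔ relPositions R w ⊆ D) := by
  simp only [relPositions_subset_iff]
  cases N with
  | zero => exact ⟨[], fun R _ w hw => by simp [isBlockChain_nil_iff, List.length_eq_zero_iff.1 hw]⟩
  | succ N =>
    obtain ⟨a, c, hc⟩ := exists_isBlockChain_cons_iff N D
    exact ⟨(a + 1) :: c, fun R _ w hw => by simpa [hw] using hc (fun a b => ¬R a b) w hw⟩

/-! ### Toggles -/

/-- The largest value at `j` of a sequence `ka` for which both `ka / lam` and `mu / ka` are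
horizontal strips; the smallest one is `max (lam j) (mu (j + 1))`. -/
def stripUpper (lam mu : ℕ → ℕ) : ℕ → ℕ
  | 0 => mu 0
  | j + 1 => min (lam j) (mu (j + 1))

/-- The Bender–Knuth toggle of `ka` in the chain `lam ⊆ ka ⊆ mu`: every `ka j` is reflected in
the interval of its possible values. -/
def toggle (lam ka mu : ℕ → ℕ) (j : ℕ) : ℕ :=
  max (lam j) (mu (j + 1)) + stripUpper lam mu j - ka j

section Toggle

variable {lam ka mu : ℕ → ℕ}

theorem isHorizontalStrip_and_iff : IsHorizontalStrip lam ka ∧ IsHorizontalStrip ka mu ↔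
    ∀ j, max (lam j) (mu (j + 1)) ≤ ka j ∧ ka j ≤ stripUpper lam mu j := by
  constructor
  · rintro ⟨h, h'⟩ j
    refine ⟨max_le (h j).1 (h' j).2, ?_⟩
    cases j with
    | zero => exact (h' 0).1
    | succ j => exact le_min (h j).2 (h' (j + 1)).1
  · refine fun h => ⟨fun j => ⟨(le_max_left _ _).trans (h j).1, ?_⟩,
      fun j => ⟨?_, (le_max_right _ _).trans (h j).1⟩⟩
    · exact (h (j + 1)).2.trans (min_le_left _ _)
    · cases j with
      | zero => exact (h 0).2
      | succ j => exact (h (j + 1)).2.trans (min_le_right _ _)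

theorem toggle_add (h : IsHorizontalStrip lam ka) (h' : IsHorizontalStrip ka mu) (j : ℕ) :
    toggle lam ka mu j + ka j = max (lam j) (mu (j + 1)) + stripUpper lam mu j :=
  Nat.sub_add_cancel <|
    le_add_of_nonneg_of_le (Nat.zero_le _) (isHorizontalStrip_and_iff.1 ⟨h, h'⟩ j).2

theorem isHorizontalStrip_toggle (h : IsHorizontalStrip lam ka) (h' : IsHorizontalStrip ka mu) :
    IsHorizontalStrip lam (toggle lam ka mu) ∧ IsHorizontalStrip (toggle lam ka mu) mu := by
  refine isHorizontalStrip_and_iff.2 fun j => ?_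
  have hj := isHorizontalStrip_and_iff.1 ⟨h, h'⟩ j
  have hadd := toggle_add h h' j
  omega

theorem eq_of_toggle_eq {ka' : ℕ → ℕ} (h : IsHorizontalStrip lam ka) (h' : IsHorizontalStrip ka mu)
    (k : IsHorizontalStrip lam ka') (k' : IsHorizontalStrip ka' mu)
    (heq : toggle lam ka mu = toggle lam ka' mu) : ka = ka' :=
  funext fun j => Nat.add_left_cancel <|
    (toggle_add h h' j).trans (heq ▸ (toggle_add k k' j).symm)

theorem sum_max_add_stripUpper (lam mu : ℕ → ℕ) (M : ℕ) :
    ∑ j ∈ Finset.range M, (max (lam j) (mu (j + 1)) + stripUpper lam mu j) + stripUpper lam mu M =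
      ∑ j ∈ Finset.range M, lam j + ∑ j ∈ Finset.range (M + 1), mu j := by
  induction M with
  | zero => simp [stripUpper]
  | succ M ih =>
    rw [Finset.sum_range_succ, Finset.sum_range_succ lam, Finset.sum_range_succ mu]
    have hM : stripUpper lam mu (M + 1) = min (lam M) (mu (M + 1)) := rfl
    omega

theorem sum_toggle (h : IsHorizontalStrip lam ka) (h' : IsHorizontalStrip ka mu) {M : ℕ}
    (hM : mu M = 0) :
    ∑ j ∈ Finset.range M, toggle lam ka mu j + ∑ j ∈ Finset.range M, ka j =
      ∑ j ∈ Finset.range M, lam j + ∑ j ∈ Finset.range M, mu j := by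
  have hupper : stripUpper lam mu M = 0 := by cases M <;> simp [stripUpper, hM]
  rw [← Finset.sum_add_distrib, Finset.sum_congr rfl fun j _ => toggle_add h h' j]
  simpa [Finset.sum_range_succ, hM, hupper] using sum_max_add_stripUpper lam mu M

end Toggle

/-! ### Symmetry of the number of Yamanouchi words in the block lengths -/

theorem sum_content_add_length {u x : List ℕ} {M : ℕ} (hx : 0 ∉ x)
    (hM : ∀ j, M ≤ j → content (u ++ x) j = 0) :
    ∑ j ∈ Finset.range M, content u j + x.length =
      ∑ j ∈ Finset.range M, content (u ++ x) j := by
  simp only [content_append] at hM ⊢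
  rw [Finset.sum_add_distrib, length_eq_sum_content hx fun j hj => by have := hM j hj; omega]

/-- The weakly decreasing words `x` and `y` of positive letters continue the prefix `u` to the
Yamanouchi word `u ++ x ++ y`. -/
structure IsYamBlockPair (u x y : List ℕ) : Prop where
  isYam : IsYam (u ++ x ++ y)
  pairwise_left : x.Pairwise (· ≥ ·)
  pairwise_right : y.Pairwise (· ≥ ·)
  zero_notMem_left : 0 ∉ x
  zero_notMem_right : 0 ∉ y

namespace IsYamBlockPair

variable {u x y x₂ y₂ : List ℕ}

theorem strip_left (h : IsYamBlockPair u x y) :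
    IsHorizontalStrip (content u) (content (u ++ x)) :=
  h.isYam.of_append.isHorizontalStrip h.pairwise_left

theorem strip_right (h : IsYamBlockPair u x y) :
    IsHorizontalStrip (content (u ++ x)) (content (u ++ x ++ y)) :=
  h.isYam.isHorizontalStrip h.pairwise_right

theorem exists_toggle (h : IsYamBlockPair u x y) : ∃ x' y', IsYamBlockPair u x' y' ∧
    x'.length = y.length ∧ y'.length = x.length ∧ (x' ++ y').Perm (x ++ y) ∧
    content (u ++ x') = toggle (content u) (content (u ++ x)) (content (u ++ x ++ y)) := by
  obtain ⟨htog, htog'⟩ := isHorizontalStrip_toggle h.strip_left h.strip_right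
  obtain ⟨M, hM⟩ := exists_forall_content_eq_zero (u ++ x ++ y)
  have hMx : ∀ j, M ≤ j → content (u ++ x) j = 0 := fun j hj =>
    Nat.le_zero.1 (hM j hj ▸ (h.strip_right j).1)
  have hMtog := fun j hj => Nat.le_zero.1 (hM j hj ▸ (htog' j).1)
  obtain ⟨x', hx', hx'0, hcx⟩ := exists_pairwise_ge_content_append_eq (fun j => (htog j).1) hMtog
  rw [← hcx] at htog htog'
  obtain ⟨y', hy', hy'0, hcy⟩ := exists_pairwise_ge_content_append_eq (fun j => (htog' j).1) hM
  rw [← hcy] at htog'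
  have hsum := sum_toggle h.strip_left h.strip_right (hM M le_rfl)
  rw [← hcx] at hsum
  have hlx := sum_content_add_length h.zero_notMem_left hMx
  have hly := sum_content_add_length h.zero_notMem_right hM
  have hlx' := sum_content_add_length hx'0 (hcx ▸ hMtog)
  have hly' := sum_content_add_length hy'0 (hcy ▸ hM)
  rw [hcy] at hly'
  refine ⟨x', y', ⟨?_, hx', hy', hx'0, hy'0⟩, by omega, by omega, ?_, hcx⟩
  · exact isYam_append_of_isHorizontalStrip
      (isYam_append_of_isHorizontalStrip h.isYam.of_append.of_append htog) htog'
  · refine perm_of_content_eq (by simp [hx'0, hy'0])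
      (by simp [h.zero_notMem_left, h.zero_notMem_right]) (funext fun j => ?_)
    have hj := congrFun hcy j
    simp only [content_append] at hj ⊢
    omega

theorem eq_of_toggle_eq (h : IsYamBlockPair u x y) (h₂ : IsYamBlockPair u x₂ y₂)
    (hperm : (x ++ y).Perm (x₂ ++ y₂))
    (htog : toggle (content u) (content (u ++ x)) (content (u ++ x ++ y)) =
      toggle (content u) (content (u ++ x₂)) (content (u ++ x₂ ++ y₂))) : x = x₂ ∧ y = y₂ := by
  have hmu : content (u ++ x ++ y) = content (u ++ x₂ ++ y₂) := by
    simpa only [List.append_assoc] using content_congr (hperm.append_left u)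
  have hka : content (u ++ x) = content (u ++ x₂) :=
    RibbonSupport.eq_of_toggle_eq h.strip_left h.strip_right h₂.strip_left (hmu ▸ h₂.strip_right)
      (by rw [htog, hmu])
  refine ⟨eq_of_content_eq_of_pairwise_ge h.zero_notMem_left h₂.zero_notMem_left h.pairwise_left
      h₂.pairwise_left (funext fun j => ?_),
    eq_of_content_eq_of_pairwise_ge h.zero_notMem_right h₂.zero_notMem_right h.pairwise_right
      h₂.pairwise_right (funext fun j => ?_)⟩
  · have hj := congrFun hka j
    simp only [content_append] at hj
    omega
  · have hj := congrFun hka j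
    have hj' := congrFun hmu j
    simp only [content_append] at hj hj'
    omega

end IsYamBlockPair

/-- The words `v` that complete the prefix `u` to a Yamanouchi rearrangement of `w` and consist of
weakly decreasing blocks of lengths `c`. -/
def yamCompletions (w u c : List ℕ) : Set (List ℕ) :=
  {v | IsYam (u ++ v) ∧ (u ++ v).Perm w ∧ IsBlockChain (· ≥ ·) c v}

section YamCompletions

variable {w u c : List ℕ}

theorem mem_yamCompletions_cons_iff {v : List ℕ} {a : ℕ} : v ∈ yamCompletions w u (a :: c) ↔
    ∃ x z, v = x ++ z ∧ x.length = a ∧ x.Pairwise (· ≥ ·) ∧ z ∈ yamCompletions w (u ++ x) c := by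
  simp only [yamCompletions, Set.mem_ofPred_eq, isBlockChain_cons_iff, List.isChain_iff_pairwise]
  constructor
  · rintro ⟨hyam, hperm, x, z, hlen, rfl, hx, hz⟩
    rw [← List.append_assoc] at hyam hperm
    exact ⟨x, z, rfl, hlen, hx, hyam, hperm, hz⟩
  · rintro ⟨x, z, rfl, hlen, hx, hyam, hperm, hz⟩
    rw [List.append_assoc] at hyam hperm
    exact ⟨hyam, hperm, x, z, hlen, rfl, hx, hz⟩

theorem mem_yamCompletions_cons_cons_iff (hw : 0 ∉ w) {v : List ℕ} {a b : ℕ} :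
    v ∈ yamCompletions w u (a :: b :: c) ↔ ∃ x y z, v = x ++ (y ++ z) ∧ x.length = a ∧
      y.length = b ∧ IsYamBlockPair u x y ∧ z ∈ yamCompletions w (u ++ x ++ y) c := by
  simp only [mem_yamCompletions_cons_iff]
  constructor
  · rintro ⟨x, _, rfl, hxa, hx, y, z, rfl, hyb, hy, hz⟩
    have h0 : 0 ∉ u ++ x ++ y := fun h0 => hw (hz.2.1.subset (List.mem_append_left z h0))
    simp only [List.mem_append, not_or] at h0
    exact ⟨x, y, z, rfl, hxa, hyb, ⟨hz.1.of_append, hx, hy, h0.1.2, h0.2⟩, hz⟩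
  · rintro ⟨x, y, z, rfl, hxa, hyb, h, hz⟩
    exact ⟨x, _, rfl, hxa, h.pairwise_left, y, z, rfl, hyb, h.pairwise_right, hz⟩

theorem mem_yamCompletions_of_perm {s s' z : List ℕ} (hz : z ∈ yamCompletions w s c)
    (hs' : IsYam s') (hp : s'.Perm s) : z ∈ yamCompletions w s' c :=
  ⟨hz.1.append_of_perm hs' hp, (hp.append_right z).trans hz.2.1, hz.2.2⟩

theorem exists_injOn_yamCompletions_swap (hw : 0 ∉ w) (u c : List ℕ) (a b : ℕ) :
    ∃ f : List ℕ → List ℕ, Set.MapsTo f (yamCompletions w u (a :: b :: c))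
      (yamCompletions w u (b :: a :: c)) ∧ Set.InjOn f (yamCompletions w u (a :: b :: c)) := by
  have htoggle : ∀ v ∈ yamCompletions w u (a :: b :: c), ∃ v' ∈ yamCompletions w u (b :: a :: c),
      ∃ x y z x' y', v = x ++ (y ++ z) ∧ v' = x' ++ (y' ++ z) ∧ x'.length = b ∧ y'.length = a ∧
        IsYamBlockPair u x y ∧ (x' ++ y').Perm (x ++ y) ∧
        content (u ++ x') = toggle (content u) (content (u ++ x)) (content (u ++ x ++ y)) := by
    intro v hv
    obtain ⟨x, y, z, rfl, rfl, rfl, h, hz⟩ := (mem_yamCompletions_cons_cons_iff hw).1 hv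
    obtain ⟨x', y', h', hx', hy', hperm, hcont⟩ := h.exists_toggle
    refine ⟨x' ++ (y' ++ z), (mem_yamCompletions_cons_cons_iff hw).2
      ⟨x', y', z, rfl, hx', hy', h', mem_yamCompletions_of_perm hz h'.isYam ?_⟩,
      x, y, z, x', y', rfl, rfl, hx', hy', h, hperm, hcont⟩
    simpa only [List.append_assoc] using hperm.append_left u
  choose! f hmaps hf using htoggle
  refine ⟨f, hmaps, fun v hv v₂ hv₂ heq => ?_⟩
  obtain ⟨x, y, z, x', y', rfl, hfv, hx', hy', h, hperm, hcont⟩ := hf v hv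
  obtain ⟨x₂, y₂, z₂, x₂', y₂', rfl, hfv₂, hx₂', hy₂', h₂, hperm₂, hcont₂⟩ := hf v₂ hv₂
  rw [hfv, hfv₂] at heq
  obtain ⟨rfl, htail⟩ := List.append_inj heq (hx'.trans hx₂'.symm)
  obtain ⟨rfl, rfl⟩ := List.append_inj htail (hy'.trans hy₂'.symm)
  obtain ⟨rfl, rfl⟩ := h.eq_of_toggle_eq h₂ (hperm.symm.trans hperm₂) (hcont.symm.trans hcont₂)
  rfl

theorem exists_injOn_yamCompletions (hw : 0 ∉ w) {c c' : List ℕ} (h : c.Perm c') (u : List ℕ) :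
    ∃ f : List ℕ → List ℕ, Set.MapsTo f (yamCompletions w u c) (yamCompletions w u c') ∧
      Set.InjOn f (yamCompletions w u c) := by
  induction h generalizing u with
  | nil => exact ⟨id, Set.mapsTo_id _, Function.injective_id.injOn⟩
  | @cons a c c' _ ih =>
    choose f hmaps hinj using ih
    refine ⟨fun v => v.take a ++ f (u ++ v.take a) (v.drop a), fun v hv => ?_,
      fun v hv v₂ hv₂ heq => ?_⟩
    · obtain ⟨x, z, rfl, rfl, hx, hz⟩ := mem_yamCompletions_cons_iff.1 hv
      simp only [List.take_left, List.drop_left]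
      exact mem_yamCompletions_cons_iff.2 ⟨x, _, rfl, rfl, hx, hmaps _ hz⟩
    · obtain ⟨x, z, rfl, rfl, -, hz⟩ := mem_yamCompletions_cons_iff.1 hv
      obtain ⟨x₂, z₂, rfl, hlen, -, hz₂⟩ := mem_yamCompletions_cons_iff.1 hv₂
      simp only [List.take_left, List.drop_left, ← hlen] at heq
      rw [hlen, List.take_left, List.drop_left] at heq
      obtain ⟨rfl, heq⟩ := List.append_inj heq hlen.symm
      rw [hinj _ hz hz₂ heq]
  | swap a b c => exact exists_injOn_yamCompletions_swap hw u c b a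
  | trans _ _ ih ih' =>
    obtain ⟨f, hmaps, hinj⟩ := ih u
    obtain ⟨g, hmaps', hinj'⟩ := ih' u
    exact ⟨g ∘ f, hmaps'.comp hmaps, hinj'.comp hinj hmaps⟩

end YamCompletions

/-! ### Evacuation -/

theorem card_filter_subset_eq {β ι : Type*} [DecidableEq ι] (X : Finset β) (A : β → Finset ι)
    (D : Finset ι) : (X.filter (A · ⊆ D)).card =
      (X.filter (A · = D)).card + ∑ E ∈ D.ssubsets, (X.filter (A · = E)).card := by
  have hmaps : ∀ w ∈ X.filter (A · ⊆ D), A w ∈ D.powerset := fun w hw =>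
    Finset.mem_powerset.2 (Finset.mem_filter.1 hw).2
  have hfiber : ∀ E ∈ D.powerset,
      ((X.filter (A · ⊆ D)).filter (A · = E)).card = (X.filter (A · = E)).card := by
    intro E hE
    rw [Finset.filter_filter]
    congr 1
    refine Finset.filter_congr fun w _ => and_iff_right_of_imp ?_
    rintro rfl
    exact Finset.mem_powerset.1 hE
  rw [Finset.card_eq_sum_card_fiberwise hmaps, Finset.sum_congr rfl hfiber,
    ← Finset.add_sum_erase _ _ (Finset.mem_powerset_self D)]
  rfl

theorem card_filter_eq_of_card_filter_subset_eq {β ι : Type*} [DecidableEq ι] (X : Finset β)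
    (A B : β → Finset ι)
    (h : ∀ D, (X.filter (A · ⊆ D)).card = (X.filter (B · ⊆ D)).card) (D : Finset ι) :
    (X.filter (A · = D)).card = (X.filter (B · = D)).card := by
  induction D using Finset.strongInduction with
  | H D ih =>
    have hD := h D
    rw [card_filter_subset_eq, card_filter_subset_eq,
      Finset.sum_congr rfl fun E hE => ih E (Finset.mem_ssubsets.1 hE)] at hD
    exact Nat.add_right_cancel hD

theorem finite_yamCompletions_nil (w c : List ℕ) : (yamCompletions w [] c).Finite :=
  (List.finite_toSet w.permutations).subset fun _ hv => List.mem_permutations.2 hv.2.1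

theorem ncard_yamCompletions_nil_eq {w c c' : List ℕ} (hw : 0 ∉ w) (h : c.Perm c') :
    (yamCompletions w [] c).ncard = (yamCompletions w [] c').ncard := by
  refine le_antisymm ?_ ?_
  · obtain ⟨f, hmaps, hinj⟩ := exists_injOn_yamCompletions hw h []
    exact Set.ncard_le_ncard_of_injOn f hmaps hinj (finite_yamCompletions_nil w c')
  · obtain ⟨f, hmaps, hinj⟩ := exists_injOn_yamCompletions hw h.symm []
    exact Set.ncard_le_ncard_of_injOn f hmaps hinj (finite_yamCompletions_nil w c)

theorem ncard_ascents_subset_eq {u : List ℕ} (h0 : 0 ∉ u) (D : Finset ℕ) :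
    {w | IsYam w ∧ w.Perm u ∧ relPositions (· < ·) w ⊆ D}.ncard =
      {w | IsYam w ∧ w.Perm u ∧ relPositions (· > ·) w.reverse ⊆ D}.ncard := by
  obtain ⟨c, hc⟩ := exists_isBlockChain_iff_relPositions_subset u.length D
  have hasc : {w | IsYam w ∧ w.Perm u ∧ relPositions (· < ·) w ⊆ D} = yamCompletions u [] c := by
    ext w
    refine and_congr_right fun _ => and_congr_right fun hperm => ?_
    simpa only [not_lt] using (hc (· < ·) w hperm.length_eq).symm
  have hdesc : {w | IsYam w ∧ w.Perm u ∧ relPositions (· > ·) w.reverse ⊆ D} =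
      yamCompletions u [] c.reverse := by
    ext w
    refine and_congr_right fun _ => and_congr_right fun hperm => ?_
    rw [← hc (· > ·) w.reverse (w.length_reverse.trans hperm.length_eq),
      ← isBlockChain_reverse_iff, List.reverse_reverse]
    simp only [gt_iff_lt, not_lt]
  rw [hasc, hdesc]
  exact ncard_yamCompletions_nil_eq h0 (List.reverse_perm c).symm

theorem exists_isYam_perm_ascents_eq_descents_reverse {u : List ℕ} (hu : IsYam u) (h0 : 0 ∉ u) :
    ∃ w, IsYam w ∧ w.Perm u ∧ relPositions (· < ·) w = relPositions (· > ·) u.reverse := by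
  classical
  set X : Finset (List ℕ) := {w ∈ u.permutations.toFinset | IsYam w} with hX
  have hmem : ∀ w, w ∈ X ↔ IsYam w ∧ w.Perm u := fun w => by simp [hX, and_comm]
  have hcount : ∀ D, (X.filter fun w => relPositions (· < ·) w ⊆ D).card =
      (X.filter fun w => relPositions (· > ·) w.reverse ⊆ D).card := by
    intro D
    simpa only [← Set.ncard_coe_finset, Finset.coe_filter, hmem, and_assoc] using
      ncard_ascents_subset_eq h0 D
  have hcard := card_filter_eq_of_card_filter_subset_eq X _ _ hcount
    (relPositions (· > ·) u.reverse)
  have hpos : 0 < (X.filter fun w =>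
      relPositions (· > ·) w.reverse = relPositions (· > ·) u.reverse).card :=
    Finset.card_pos.2 ⟨u, Finset.mem_filter.2 ⟨(hmem u).2 ⟨hu, .refl u⟩, rfl⟩⟩
  rw [← hcard] at hpos
  obtain ⟨w, hw⟩ := Finset.card_pos.1 hpos
  obtain ⟨hwX, hweq⟩ := Finset.mem_filter.1 hw
  obtain ⟨hyam, hperm⟩ := (hmem w).1 hwX
  exact ⟨w, hyam, hperm, hweq⟩

/-! ### Peeling off the first row -/

section Sequences

variable {f g : ℕ → ℕ}

theorem sum_range_le_sum_range (f : ℕ → ℕ) {m k : ℕ} (h : m ≤ k) :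
    ∑ j ∈ Finset.range m, f j ≤ ∑ j ∈ Finset.range k, f j :=
  Finset.sum_le_sum_of_subset (Finset.range_mono h)

/-- The row `t` contains the topmost removable corner of the Young diagram with rows `f`: the rows
`0, …, t` have equal length and the next one is shorter. -/
def IsFirstDescent (f : ℕ → ℕ) (t : ℕ) : Prop := f (t + 1) < f t ∧ ∀ j ≤ t, f j = f 0

theorem exists_isFirstDescent (hf : Antitone f) {M : ℕ} (h0 : 0 < f 0) (hM : f M = 0) :
    ∃ t, IsFirstDescent f t := by
  have hex : ∃ j, f j < f 0 := ⟨M, hM ▸ h0⟩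
  have hbefore : ∀ j < Nat.find hex, f j = f 0 := fun j hj =>
    (hf (Nat.zero_le j)).antisymm (not_lt.1 (Nat.find_min hex hj))
  obtain ⟨t, ht⟩ : ∃ t, Nat.find hex = t + 1 :=
    Nat.exists_eq_succ_of_ne_zero ((Nat.find_pos hex).2 (lt_irrefl _)).ne'
  have hafter := Nat.find_spec hex
  rw [ht] at hbefore hafter
  exact ⟨t, hafter.trans_eq (hbefore t (Nat.lt_succ_self t)).symm,
    fun j hj => hbefore j (Nat.lt_succ_of_le hj)⟩

theorem IsFirstDescent.pos {t : ℕ} (ht : IsFirstDescent f t) : 0 < f t :=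
  (Nat.zero_le _).trans_lt ht.1

theorem sum_range_succ_lt_sum_range_add {t m : ℕ} (hf : Antitone f) (hg : Antitone g)
    (hdom : ∀ m, ∑ j ∈ Finset.range m, f j ≤ ∑ j ∈ Finset.range m, g j)
    (ht : g (t + 1) < g t) (htm : t < m) :
    ∑ j ∈ Finset.range (m + 1), f j < ∑ j ∈ Finset.range m, g j + f 0 := by
  have hm' := hdom (m + 1)
  have hf0 : f m ≤ f 0 := hf (Nat.zero_le m)
  rw [Finset.sum_range_succ] at hm' ⊢
  rw [Finset.sum_range_succ] at hm'
  by_contra! hle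
  have hfg : ∀ j ≤ m, f j ≤ g m := fun j _ => (hf (Nat.zero_le j)).trans (by omega)
  have hlt : ∑ j ∈ Finset.range m, f j < ∑ j ∈ Finset.range m, g j :=
    Finset.sum_lt_sum (fun j hj => (hfg j (Finset.mem_range.1 hj).le).trans
      (hg (Finset.mem_range.1 hj).le)) ⟨t, Finset.mem_range.2 htm,
        (hfg t htm.le).trans_lt ((hg htm).trans_lt ht)⟩
  omega

-- `h` takes the largest values allowed by `C` until the partial sums of `f` become binding.
theorem exists_greedy_interlacing {C : ℕ → ℕ} {a : ℕ} (ha : a ≤ f 0) (hC : ∀ j, f (j + 1) ≤ C j) :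
    ∃ h : ℕ → ℕ, (∀ j, f (j + 1) ≤ h j ∧ h j ≤ C j) ∧ ∀ m, ∑ j ∈ Finset.range m, h j =
      min (∑ j ∈ Finset.range m, C j) (∑ j ∈ Finset.range (m + 1), f j - a) := by
  set F : ℕ → ℕ := fun m => min (∑ j ∈ Finset.range m, C j) (∑ j ∈ Finset.range (m + 1), f j - a)
    with hF
  have hstep : ∀ m, F m + f (m + 1) ≤ F (m + 1) ∧ F (m + 1) ≤ F m + C m := by
    intro m
    have hm : a ≤ ∑ j ∈ Finset.range (m + 1), f j := by
      rw [Finset.sum_range_succ']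
      omega
    have hCm := hC m
    simp only [hF, Finset.sum_range_succ C, Finset.sum_range_succ f (m + 1)]
    omega
  have hmono : Monotone F := monotone_nat_of_le_succ fun m => le_of_add_le_left (hstep m).1
  refine ⟨fun m => F (m + 1) - F m, fun m => ?_, fun m => ?_⟩
  · have hm := hstep m
    change f (m + 1) ≤ F (m + 1) - F m ∧ F (m + 1) - F m ≤ C m
    omega
  · rw [Finset.sum_range_tsub hmono]
    simp [hF]

end Sequences

/-- The shape of a monotone ribbon with `K` rows of lengths `α 0 ≥ α 1 ≥ ⋯`, in which the rows `i`
and `i + 1` share a column iff `ov i`; the rows from `i` on occupy `c i` columns. Beyond the last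
row all data vanish. -/
structure IsRibbonShape (K : ℕ) (α : ℕ → ℕ) (ov : ℕ → Bool) (c : ℕ → ℕ) : Prop where
  antitone : Antitone α
  two_le : ∀ i < K, 2 ≤ α i
  row_eq_zero : ∀ i, K ≤ i → α i = 0
  ov_eq_false : ∀ i, K ≤ i + 1 → ov i = false
  cols_eq_zero : ∀ i, K ≤ i → c i = 0
  cols_add : ∀ i, c i + (ov i).toNat = c (i + 1) + α i

namespace IsRibbonShape

variable {K : ℕ} {α c : ℕ → ℕ} {ov : ℕ → Bool}

theorem tail (h : IsRibbonShape (K + 1) α ov c) :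
    IsRibbonShape K (fun i => α (i + 1)) (fun i => ov (i + 1)) (fun i => c (i + 1)) where
  antitone := fun _ _ hij => h.antitone (Nat.succ_le_succ hij)
  two_le i hi := h.two_le (i + 1) (Nat.succ_lt_succ hi)
  row_eq_zero i hi := h.row_eq_zero (i + 1) (Nat.succ_le_succ hi)
  ov_eq_false i hi := h.ov_eq_false (i + 1) (Nat.succ_le_succ hi)
  cols_eq_zero i hi := h.cols_eq_zero (i + 1) (Nat.succ_le_succ hi)
  cols_add i := h.cols_add (i + 1)

theorem cols_succ_lt (h : IsRibbonShape K α ov c) {i : ℕ} (hi : i < K) : c (i + 1) < c i := by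
  have hcols := h.cols_add i
  have hov := (ov i).toNat_le
  have hrow := h.two_le i hi
  omega

theorem sub_le_cols (h : IsRibbonShape K α ov c) (i : ℕ) : K - i ≤ c i := by
  rcases le_total K i with hi | hi
  · omega
  · induction hi using Nat.decreasingInduction with
    | self => omega
    | of_succ i hi ih =>
      have hlt := h.cols_succ_lt hi
      omega

theorem antitone_cols (h : IsRibbonShape K α ov c) : Antitone c :=
  antitone_nat_of_succ_le fun i => by
    rcases lt_or_ge i K with hi | hi
    · exact (h.cols_succ_lt hi).le
    · rw [h.cols_eq_zero (i + 1) (hi.trans i.le_succ)]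
      exact Nat.zero_le _

theorem row_le_cols (h : IsRibbonShape K α ov c) (i : ℕ) : α i ≤ c i := by
  have hcols := h.cols_add i
  have hsub := h.sub_le_cols (i + 1)
  have hov := (ov i).toNat_le
  rcases lt_or_ge (i + 1) K with hi | hi
  · omega
  · rw [h.ov_eq_false i hi, Bool.toNat_false] at hcols
    omega

theorem lt_of_ov (h : IsRibbonShape K α ov c) {i : ℕ} (hi : ov i = true) : i + 1 < K := by
  by_contra! hK
  exact Bool.false_ne_true ((h.ov_eq_false i hK).symm.trans hi)

theorem sum_eq_of_le (h : IsRibbonShape K α ov c) {i : ℕ} (hi : K ≤ i) :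
    ∑ j ∈ Finset.range i, α j = ∑ j ∈ Finset.range K, α j :=
  Finset.eventually_constant_sum h.row_eq_zero hi

theorem sum_add_cols_le (h : IsRibbonShape K α ov c) (i : ℕ) :
    ∑ j ∈ Finset.range i, α j + c i ≤ ∑ j ∈ Finset.range K, α j := by
  rcases le_total K i with hi | hi
  · rw [h.sum_eq_of_le hi, h.cols_eq_zero i hi, add_zero]
  · induction hi using Nat.decreasingInduction with
    | self => rw [h.cols_eq_zero K le_rfl, add_zero]
    | of_succ i _ ih =>
      have hcols := h.cols_add i
      rw [Finset.sum_range_succ] at ih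
      omega

theorem le_sum_add_cols (h : IsRibbonShape K α ov c) (i : ℕ) :
    ∑ j ∈ Finset.range K, α j ≤ ∑ j ∈ Finset.range i, α j + c i + (K - 1 - i) := by
  rcases le_total K i with hi | hi
  · rw [h.sum_eq_of_le hi]
    omega
  · induction hi using Nat.decreasingInduction with
    | self => omega
    | of_succ i hi ih =>
      have hcols := h.cols_add i
      have hov := (ov i).toNat_le
      rw [Finset.sum_range_succ] at ih
      rcases lt_or_ge (i + 1) K with hK | hK
      · omega
      · rw [h.ov_eq_false i hK, Bool.toNat_false] at hcols
        omega

end IsRibbonShape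

/-- The numerical conditions on a content `ν` that characterise the Schur support of a monotone
ribbon with `K` rows of lengths `α` and column counts `c`. -/
structure IsAdmissible (K : ℕ) (α c ν : ℕ → ℕ) : Prop where
  antitone : Antitone ν
  le_cols : ∀ i, ν i ≤ c i
  dom : ∀ m, ∑ j ∈ Finset.range m, α j ≤ ∑ j ∈ Finset.range m, ν j
  sum_eq : ∑ j ∈ Finset.range K, ν j = ∑ j ∈ Finset.range K, α j

namespace IsAdmissible

variable {K : ℕ} {α c ν : ℕ → ℕ} {ov : ℕ → Bool}

theorem eq_zero_of_le (hν : IsAdmissible K α c ν) (h : IsRibbonShape K α ov c) {i : ℕ}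
    (hi : K ≤ i) : ν i = 0 :=
  Nat.eq_zero_of_le_zero ((hν.le_cols i).trans_eq (h.cols_eq_zero i hi))

theorem sum_le (hν : IsAdmissible K α c ν) (h : IsRibbonShape K α ov c) (m : ℕ) :
    ∑ j ∈ Finset.range m, ν j ≤ ∑ j ∈ Finset.range K, α j := by
  rw [← hν.sum_eq]
  rcases le_total m K with hm | hm
  · exact sum_range_le_sum_range ν hm
  · exact (Finset.eventually_constant_sum (fun _ => hν.eq_zero_of_le h) hm).le

theorem lt_of_pos (hν : IsAdmissible K α c ν) (h : IsRibbonShape K α ov c) {i : ℕ}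
    (hi : 0 < ν i) : i < K := by
  by_contra! hK
  exact hi.ne' (hν.eq_zero_of_le h hK)

theorem exists_isFirstDescent (hν : IsAdmissible K α c ν) (h : IsRibbonShape K α ov c)
    (hK : 0 < K) : ∃ t, IsFirstDescent ν t := by
  have hdom : α 0 ≤ ν 0 := by simpa only [Finset.sum_range_one] using hν.dom 1
  have hα := h.two_le 0 hK
  exact RibbonSupport.exists_isFirstDescent hν.antitone (by omega) (hν.eq_zero_of_le h le_rfl)

-- A row of `ν` below the first descent that is too long forces the rows above it to be so long
-- that they exceed the total size.
theorem lt_cols_succ_add (hν : IsAdmissible K α c ν) (h : IsRibbonShape K α ov c) {t i : ℕ}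
    (ht : ν (t + 1) < ν t) (hti : t < i) (hi : i < K) : ν i < c (i + 1) + α 0 := by
  by_contra! hge
  have hle : ∀ j, α j ≤ α 0 := fun j => h.antitone (Nat.zero_le j)
  have hα : ∑ j ∈ Finset.range i, α j ≤ i * α 0 := by
    simpa using Finset.sum_le_card_nsmul (Finset.range i) α (α 0) fun j _ => hle j
  have hlt : i * ν i < ∑ j ∈ Finset.range i, ν j := by
    simpa using Finset.sum_lt_sum (s := Finset.range i) (f := fun _ => ν i)
      (fun j hj => hν.antitone (Finset.mem_range.1 hj).le)
      ⟨t, Finset.mem_range.2 hti, (hν.antitone hti).trans_lt ht⟩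
  have hsum := hν.sum_le h (i + 1)
  rw [Finset.sum_range_succ] at hsum
  have htotal := h.le_sum_add_cols i
  have hrest := h.sub_le_cols (i + 1)
  have hmul : i * (α 0 + (K - 1 - i)) ≤ i * ν i := Nat.mul_le_mul_left i (by omega)
  have hone : 1 * (K - 1 - i) ≤ i * (K - 1 - i) := Nat.mul_le_mul_right _ (by omega)
  have hov := h.cols_add i
  have hαi := hle i
  rw [Nat.mul_add] at hmul
  omega

end IsAdmissible

/-- The row lengths `ν` after removing a box from row `t`. -/
def removeBox (ν : ℕ → ℕ) (t j : ℕ) : ℕ := ν j - if j = t then 1 else 0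

/-- The bound on row `j` of the content left after peeling off the first row of the ribbon, when
the first row takes a box in row `t` and the remaining rows occupy `c 1` columns. -/
def rowCap (c ν : ℕ → ℕ) (t j : ℕ) : ℕ := min (removeBox ν t j) (c (j + 1))

theorem removeBox_of_ne {ν : ℕ → ℕ} {t j : ℕ} (hj : j ≠ t) : removeBox ν t j = ν j := by
  rw [removeBox, if_neg hj, Nat.sub_zero]

theorem removeBox_le (ν : ℕ → ℕ) (t j : ℕ) : removeBox ν t j ≤ ν j := Nat.sub_le _ _

theorem removeBox_self (ν : ℕ → ℕ) (t : ℕ) : removeBox ν t t = ν t - 1 := by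
  rw [removeBox, if_pos rfl]

theorem sum_removeBox_add {ν : ℕ → ℕ} {t : ℕ} (ht : 0 < ν t) (m : ℕ) :
    ∑ j ∈ Finset.range m, removeBox ν t j + (if t < m then 1 else 0) =
      ∑ j ∈ Finset.range m, ν j := by
  have hle : ∀ j ∈ Finset.range m, (if j = t then 1 else 0) ≤ ν j := fun j _ => by
    split_ifs with hj
    · exact hj ▸ ht
    · exact Nat.zero_le _
  have hone : ∑ j ∈ Finset.range m, (if j = t then 1 else 0) = if t < m then 1 else 0 := by
    simp only [Finset.sum_ite_eq', Finset.mem_range]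
  rw [← hone, ← Finset.sum_add_distrib]
  exact Finset.sum_congr rfl fun j hj => Nat.sub_add_cancel (hle j hj)

section RowCap

variable {K t : ℕ} {α c ν : ℕ → ℕ} {ov : ℕ → Bool}

theorem succ_le_rowCap (hν : IsAdmissible K α c ν) (ht : ν (t + 1) < ν t) (j : ℕ) :
    ν (j + 1) ≤ rowCap c ν t j := by
  refine le_min ?_ (hν.le_cols (j + 1))
  rcases eq_or_ne j t with rfl | hj
  · rw [removeBox_self]
    exact Nat.le_sub_one_of_lt ht
  · rw [removeBox_of_ne hj]
    exact hν.antitone j.le_succ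

theorem rowCap_le (c ν : ℕ → ℕ) (t j : ℕ) : rowCap c ν t j ≤ ν j :=
  (min_le_left _ _).trans (removeBox_le ν t j)

theorem le_of_cols_lt_removeBox (hν : IsAdmissible K α c ν) (ht : IsFirstDescent ν t) {j : ℕ}
    (hj : c (j + 1) < removeBox ν t j) : t ≤ j := by
  by_contra! hlt
  have hconst : ν j = ν (j + 1) := (ht.2 j hlt.le).trans (ht.2 (j + 1) hlt).symm
  have hcols := hν.le_cols (j + 1)
  rw [removeBox_of_ne hlt.ne] at hj
  omega

theorem sum_le_sum_rowCap_add_of_forall_le (h : IsRibbonShape K α ov c)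
    (hν : IsAdmissible K α c ν) (ht : ν (t + 1) < ν t) {m : ℕ}
    (hm : ∀ j < m, removeBox ν t j ≤ c (j + 1)) :
    ∑ j ∈ Finset.range (m + 1), α j ≤ ∑ j ∈ Finset.range m, rowCap c ν t j + α 0 := by
  have hcap : ∑ j ∈ Finset.range m, rowCap c ν t j = ∑ j ∈ Finset.range m, removeBox ν t j :=
    Finset.sum_congr rfl fun j hj => min_eq_left (hm j (Finset.mem_range.1 hj))
  have hbox := sum_removeBox_add ((Nat.zero_le _).trans_lt ht) m
  rw [hcap]
  split_ifs at hbox with htm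
  · have hlt := sum_range_succ_lt_sum_range_add h.antitone hν.antitone hν.dom ht htm
    omega
  · have hα : α m ≤ α 0 := h.antitone (Nat.zero_le m)
    have hdom := hν.dom m
    rw [Finset.sum_range_succ]
    omega

theorem sum_le_sum_rowCap_add_of_exists_lt (h : IsRibbonShape K α ov c)
    (hν : IsAdmissible K α c ν) (ht : IsFirstDescent ν t) {m : ℕ}
    (hsat : ∃ i < m, c (i + 1) < removeBox ν t i) (hpos : ∀ j < m, 0 < ν j) :
    ∑ j ∈ Finset.range K, α j ≤
      ∑ j ∈ Finset.range m, rowCap c ν t j + α 0 + (K - 1 - m) := by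
  induction m with
  | zero =>
    obtain ⟨i, hi, -⟩ := hsat
    exact absurd hi (Nat.not_lt_zero i)
  | succ m ih =>
    have hpos' : ∀ j < m, 0 < ν j := fun j hj => hpos j (hj.trans m.lt_succ_self)
    rw [Finset.sum_range_succ]
    by_cases hm : c (m + 1) < removeBox ν t m
    · have hcap : rowCap c ν t m = c (m + 1) := min_eq_right hm.le
      have htotal := h.le_sum_add_cols (m + 1)
      have hcols := h.sub_le_cols (m + 1)
      by_cases hex : ∃ i < m, c (i + 1) < removeBox ν t i
      · have hprev := ih hex hpos'
        omega
      · push Not at hex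
        have hprev := sum_le_sum_rowCap_add_of_forall_le h hν ht.1 hex
        omega
    · obtain ⟨i, him, hi⟩ := hsat
      have hlt : i < m := lt_of_le_of_ne (Nat.le_of_lt_succ him) fun he => hm (he ▸ hi)
      have hti := le_of_cols_lt_removeBox hν ht hi
      have hcap : rowCap c ν t m = ν m := by
        rw [rowCap, min_eq_left (not_lt.1 hm), removeBox_of_ne (hti.trans_lt hlt).ne']
      have hprev := ih ⟨i, hlt, hi⟩ hpos'
      have hm0 := hpos m m.lt_succ_self
      omega

theorem removeBox_lt_cols_succ_add (h : IsRibbonShape K α ov c) (hν : IsAdmissible K α c ν)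
    (ht : IsFirstDescent ν t) {i : ℕ} (hi : c (i + 1) < removeBox ν t i) :
    removeBox ν t i < c (i + 1) + α 0 := by
  have hle := removeBox_le ν t i
  rcases (le_of_cols_lt_removeBox hν ht hi).eq_or_lt with rfl | hti
  · have hcols := h.cols_add t
    have hνt := hν.le_cols t
    have hα : α t ≤ α 0 := h.antitone (Nat.zero_le t)
    rw [removeBox_self] at hi ⊢
    omega
  · exact hle.trans_lt (hν.lt_cols_succ_add h ht.1 hti (hν.lt_of_pos h (by omega)))

theorem sum_le_sum_rowCap_add_of_unique (h : IsRibbonShape K α ov c)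
    (hν : IsAdmissible K α c ν) (ht : IsFirstDescent ν t) {i : ℕ}
    (hi : c (i + 1) < removeBox ν t i)
    (huniq : ∀ j, c (j + 1) < removeBox ν t j → j = i) :
    ∑ j ∈ Finset.range K, α j ≤ ∑ j ∈ Finset.range K, rowCap c ν t j + α 0 := by
  have hbox := sum_removeBox_add ht.pos K
  rw [if_pos (hν.lt_of_pos h ht.pos), hν.sum_eq] at hbox
  have hpoint : ∀ j, removeBox ν t j ≤
      rowCap c ν t j + if j = i then removeBox ν t i - c (i + 1) else 0 := by
    intro j
    rw [rowCap]
    split_ifs with hj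
    · subst hj
      omega
    · have hle : removeBox ν t j ≤ c (j + 1) := not_lt.1 fun hlt => hj (huniq j hlt)
      omega
  have hiK : i < K := hν.lt_of_pos h (by have := removeBox_le ν t i; omega)
  have hsum := Finset.sum_le_sum fun j (_ : j ∈ Finset.range K) => hpoint j
  rw [Finset.sum_add_distrib, Finset.sum_ite_eq', if_pos (Finset.mem_range.2 hiK)] at hsum
  have hexcess := removeBox_lt_cols_succ_add h hν ht hi
  omega

theorem sum_le_sum_rowCap_add (h : IsRibbonShape K α ov c) (hν : IsAdmissible K α c ν)
    (ht : IsFirstDescent ν t) :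
    ∑ j ∈ Finset.range K, α j ≤ ∑ j ∈ Finset.range K, rowCap c ν t j + α 0 := by
  by_cases hex : ∃ i < K, c (i + 1) < removeBox ν t i
  · by_cases htwo : ∃ i j, i < j ∧ c (i + 1) < removeBox ν t i ∧ c (j + 1) < removeBox ν t j
    · obtain ⟨i, j, hij, hi, hj⟩ := htwo
      have hνj : 0 < ν j := by have := removeBox_le ν t j; omega
      have hprev := sum_le_sum_rowCap_add_of_exists_lt h hν ht ⟨i, hij, hi⟩
        fun k hk => hνj.trans_le (hν.antitone hk.le)
      have hcols := h.sub_le_cols (j + 1)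
      have hcap : rowCap c ν t j = c (j + 1) := min_eq_right hj.le
      have hmono := sum_range_le_sum_range (rowCap c ν t) (hν.lt_of_pos h hνj)
      rw [Finset.sum_range_succ] at hmono
      omega
    · obtain ⟨i, -, hi⟩ := hex
      push Not at htwo
      refine sum_le_sum_rowCap_add_of_unique h hν ht hi fun j hj => ?_
      rcases lt_trichotomy i j with hij | hij | hij
      · exact absurd hj (htwo i j hij hi).not_gt
      · exact hij.symm
      · exact absurd hi (htwo j i hij hj).not_gt
  · push Not at hex
    have hle := sum_le_sum_rowCap_add_of_forall_le h hν ht.1 hex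
    exact (sum_range_le_sum_range α K.le_succ).trans hle

theorem sum_range_succ_le_sum_rowCap_add (h : IsRibbonShape K α ov c)
    (hν : IsAdmissible K α c ν) (ht : IsFirstDescent ν t) (m : ℕ) :
    ∑ j ∈ Finset.range (m + 1), α j ≤ ∑ j ∈ Finset.range m, rowCap c ν t j + α 0 := by
  by_cases hpos : ∀ j < m, 0 < ν j
  · by_cases hex : ∃ i < m, c (i + 1) < removeBox ν t i
    · have hle := sum_le_sum_rowCap_add_of_exists_lt h hν ht hex hpos
      have hcols := h.sub_le_cols (m + 1)
      have hrest := h.sum_add_cols_le (m + 1)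
      omega
    · push Not at hex
      exact sum_le_sum_rowCap_add_of_forall_le h hν ht.1 hex
  · push Not at hpos
    obtain ⟨j, hjm, hj⟩ := hpos
    have hle := sum_le_sum_rowCap_add h hν ht
    have hα := (Nat.le_add_right _ _).trans (h.sum_add_cols_le (m + 1))
    have hcap : ∑ j ∈ Finset.range K, rowCap c ν t j ≤ ∑ j ∈ Finset.range m, rowCap c ν t j := by
      rcases le_total K m with hKm | hmK
      · exact sum_range_le_sum_range _ hKm
      · refine (Finset.eventually_constant_sum (fun k hk => ?_) hmK).le
        exact Nat.eq_zero_of_le_zero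
          ((rowCap_le c ν t k).trans ((hν.antitone (hjm.le.trans hk)).trans hj))
    omega

theorem exists_isAdmissible_tail (h : IsRibbonShape (K + 1) α ov c)
    (hν : IsAdmissible (K + 1) α c ν) (ht : IsFirstDescent ν t) :
    ∃ ν', IsAdmissible K (fun i => α (i + 1)) (fun i => c (i + 1)) ν' ∧ IsHorizontalStrip ν' ν ∧
      ν' t < ν t ∧ ν' 0 = min (rowCap c ν t 0) (ν 0 + ν 1 - α 0) := by
  have hα0 : α 0 ≤ ν 0 := by simpa only [Finset.sum_range_one] using hν.dom 1
  obtain ⟨ν', hν', hsum⟩ := exists_greedy_interlacing hα0 (succ_le_rowCap hν ht.1)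
  have hle : ∀ j, ν' j ≤ ν j := fun j => (hν' j).2.trans (rowCap_le c ν t j)
  have hdom : ∀ m, ∑ j ∈ Finset.range m, α (j + 1) ≤ ∑ j ∈ Finset.range m, ν' j := fun m => by
    have hcap := sum_range_succ_le_sum_rowCap_add h hν ht m
    have hdomν := hν.dom (m + 1)
    rw [Finset.sum_range_succ'] at hcap
    rw [Finset.sum_range_succ' α] at hdomν
    rw [hsum]
    omega
  have hanti : Antitone ν' := antitone_nat_of_succ_le fun j => (hle (j + 1)).trans (hν' j).1
  refine ⟨ν', ⟨hanti, fun i => ?_, hdom, ?_⟩, fun j => ⟨hle j, (hν' j).1⟩, ?_, ?_⟩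
  · exact (hν' i).2.trans (min_le_right _ _)
  · refine le_antisymm ?_ (hdom K)
    rw [hsum, hν.sum_eq, Finset.sum_range_succ']
    omega
  · have hbox := (hν' t).2.trans (min_le_left _ _)
    rw [removeBox_self] at hbox
    have hpos := ht.pos
    omega
  · simpa only [Finset.sum_range_one, Finset.sum_range_succ, Finset.sum_range_zero, zero_add]
      using hsum 1

theorem exists_lt_of_ov_zero (h : IsRibbonShape (K + 1) α ov c)
    (hν : IsAdmissible (K + 1) α c ν) (hov : ov 0 = true) {ν' : ℕ → ℕ}
    (hν' : IsAdmissible K (fun i => α (i + 1)) (fun i => c (i + 1)) ν')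
    (hstrip : IsHorizontalStrip ν' ν)
    (hmin : ν' 0 = min (rowCap c ν 0 0) (ν 0 + ν 1 - α 0)) {t' : ℕ} (ht' : IsFirstDescent ν' t') :
    ∃ r, t' < r ∧ ν' r < ν r := by
  by_contra! hge
  have heq : ∀ r, ν' (r + 1) = ν (r + 1) := fun r => by
    refine le_antisymm (hstrip (r + 1)).1 ?_
    rcases lt_or_ge t' (r + 1) with hr | hr
    · exact hge _ hr
    · rw [ht'.2 _ hr]
      exact (hν.antitone (Nat.succ_le_succ r.zero_le)).trans (hstrip 0).2
  have hsumν := hν.sum_eq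
  have hsumν' := hν'.sum_eq
  have hlast : ν' K = 0 := hν'.eq_zero_of_le h.tail le_rfl
  have hsucc := Finset.sum_range_succ ν' K
  rw [Finset.sum_range_succ', Finset.sum_congr rfl fun r _ => heq r] at hsucc
  rw [Finset.sum_range_succ', Finset.sum_range_succ' α] at hsumν
  have hcols := h.cols_add 0
  have hrest := h.sum_add_cols_le 1
  have hc0 := hν.le_cols 0
  have htwo := h.two_le 0 K.succ_pos
  rw [hov, Bool.toNat_true] at hcols
  rw [Finset.sum_range_one, Finset.sum_range_succ'] at hrest
  rw [rowCap, removeBox_self] at hmin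
  have hν1 : ν 1 = 0 := by
    simp only [zero_add] at *
    omega
  have hzero : ∑ r ∈ Finset.range K, ν (r + 1) = 0 :=
    Finset.sum_eq_zero fun r _ =>
      Nat.eq_zero_of_le_zero ((hν.antitone (Nat.succ_le_succ r.zero_le)).trans_eq hν1)
  simp only [zero_add] at *
  omega

theorem exists_peel (h : IsRibbonShape (K + 1) α ov c) (hν : IsAdmissible (K + 1) α c ν)
    (ht : IsFirstDescent ν t) :
    ∃ ν', IsAdmissible K (fun i => α (i + 1)) (fun i => c (i + 1)) ν' ∧ IsHorizontalStrip ν' ν ∧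
      ν' t < ν t ∧
      (ov 0 = true → ∀ t', IsFirstDescent ν' t' → ∃ r, t' < r ∧ ν' r < ν r) := by
  obtain ⟨ν', hν', hstrip, hlt, hmin⟩ := exists_isAdmissible_tail h hν ht
  refine ⟨ν', hν', hstrip, hlt, fun hov t' ht' => ?_⟩
  rcases t with _ | t
  · exact exists_lt_of_ov_zero h hν hov hν' hstrip hmin ht'
  · refine ⟨t + 1, ?_, hlt⟩
    by_contra! hle
    have hconst : ν' (t + 1) = ν' t :=
      (ht'.2 (t + 1) hle).trans (ht'.2 t (t.le_succ.trans hle)).symm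
    exact absurd (hstrip t).2 (not_le.2 (hconst ▸ hlt))

end RowCap

/-! ### Fillings of the rotated ribbon -/

theorem getD_zero_le_of_mem {x : List ℕ} {a : ℕ} (hx : x.Pairwise (· ≤ ·)) (ha : a ∈ x) :
    x.getD 0 0 ≤ a := by
  cases x with
  | nil => exact Nat.zero_le a
  | cons b y =>
    rcases List.mem_cons.1 ha with rfl | hay
    · exact le_rfl
    · exact List.rel_of_pairwise_cons hx hay

theorem le_getD_length_sub_one_of_mem {x : List ℕ} {a : ℕ} (hx : x.Pairwise (· ≤ ·))
    (ha : a ∈ x) : a ≤ x.getD (x.length - 1) 0 := by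
  obtain ⟨k, hk, rfl⟩ := List.getElem_of_mem ha
  rw [List.getD_eq_getElem _ _ (by omega)]
  exact hx.sortedLE.getElem_le_getElem_of_le (by omega)

/-- Read in rows of lengths `α 0, α 1, …`, the word `r` weakly increases along each of the `K` rows
and strictly decreases from the last letter of a row `i` with `ov i` to the first letter of the
next one. Such words fill the ribbon rotated by 180 degrees. -/
structure IsRotatedFilling (K : ℕ) (α : ℕ → ℕ) (ov : ℕ → Bool) (r : List ℕ) : Prop where
  row_le : ∀ i < K, ∀ j, j + 1 < α i →
    r.getD (∑ k ∈ Finset.range i, α k + j) 0 ≤ r.getD (∑ k ∈ Finset.range i, α k + j + 1) 0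
  lt_of_ov : ∀ i, ov i = true →
    r.getD (∑ k ∈ Finset.range (i + 1), α k) 0 < r.getD (∑ k ∈ Finset.range (i + 1), α k - 1) 0

theorem IsRotatedFilling.append {K : ℕ} {α c : ℕ → ℕ} {ov : ℕ → Bool} {x r : List ℕ}
    (h : IsRibbonShape (K + 1) α ov c) (hx : x.Pairwise (· ≤ ·)) (hlen : x.length = α 0)
    (hr : IsRotatedFilling K (fun i => α (i + 1)) (fun i => ov (i + 1)) r)
    (hov : ov 0 = true → r.getD 0 0 < x.getD (x.length - 1) 0) :
    IsRotatedFilling (K + 1) α ov (x ++ r) := by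
  have hleft : ∀ k < α 0, (x ++ r).getD k 0 = x.getD k 0 := fun k hk =>
    List.getD_append _ _ _ _ (hlen ▸ hk)
  have hright : ∀ k, (x ++ r).getD (k + α 0) 0 = r.getD k 0 := fun k => by
    rw [List.getD_append_right _ _ _ _ (by omega), hlen, Nat.add_sub_cancel]
  refine ⟨fun i hi j hj => ?_, fun i hi => ?_⟩
  · rcases i with _ | i
    · rw [Finset.sum_range_zero, Nat.zero_add, hleft j (by omega), hleft _ hj,
        List.getD_eq_getElem _ _ (by omega), List.getD_eq_getElem _ _ (by omega)]
      exact hx.sortedLE.getElem_le_getElem_of_le (by omega)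
    · have hrow := hr.row_le i (Nat.lt_of_succ_lt_succ hi) j hj
      rw [Finset.sum_range_succ', Nat.add_right_comm _ (α 0), hright, Nat.add_right_comm _ (α 0),
        hright]
      exact hrow
  · have hα0 := h.two_le 0 K.succ_pos
    rcases i with _ | i
    · rw [Finset.sum_range_one, hleft (α 0 - 1) (by omega), ← hlen]
      have hzero := hright 0
      rw [Nat.zero_add, ← hlen] at hzero
      exact hzero ▸ hov hi
    · have hK := h.lt_of_ov hi
      have hα1 := h.two_le 1 (by omega)
      have hpos : α 1 ≤ ∑ k ∈ Finset.range (i + 1), α (k + 1) := by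
        rw [Finset.sum_range_succ']
        exact Nat.le_add_left _ _
      have hlt := hr.lt_of_ov i hi
      rw [Finset.sum_range_succ', Nat.sub_add_comm (by omega), hright, hright]
      exact hlt

theorem length_eq_of_isAdmissible_append {K : ℕ} {α c : ℕ → ℕ} {ov : ℕ → Bool} {u y : List ℕ}
    (h : IsRibbonShape (K + 1) α ov c) (hy : 0 ∉ y)
    (hu : IsAdmissible K (fun i => α (i + 1)) (fun i => c (i + 1)) (content u))
    (huy : IsAdmissible (K + 1) α c (content (u ++ y))) : y.length = α 0 := by
  have hle : ∀ j, content y j ≤ content (u ++ y) j := fun j =>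
    (List.sublist_append_right u y).count_le _
  have hlen := length_eq_sum_content hy fun j hj =>
    Nat.eq_zero_of_le_zero ((hle j).trans_eq (huy.eq_zero_of_le h hj))
  have hlast : content u K = 0 := hu.eq_zero_of_le h.tail le_rfl
  have hsum := huy.sum_eq
  have hsumu := hu.sum_eq
  simp only [content_append, Finset.sum_add_distrib] at hsum
  rw [Finset.sum_range_succ (content u), Finset.sum_range_succ' α] at hsum
  omega

theorem IsFirstDescent.unique {f : ℕ → ℕ} {s t : ℕ} (hs : IsFirstDescent f s)
    (ht : IsFirstDescent f t) : s = t := by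
  have hle : ∀ {s t}, IsFirstDescent f s → IsFirstDescent f t → s ≤ t := fun {s t} hs ht => by
    by_contra! hts
    exact ht.1.ne ((hs.2 _ hts).trans (hs.2 _ hts.le).symm)
  exact (hle hs ht).antisymm (hle ht hs)

theorem exists_isRotatedFilling {K : ℕ} : ∀ {α c ν : ℕ → ℕ} {ov : ℕ → Bool},
    IsRibbonShape K α ov c → IsAdmissible K α c ν →
    ∃ u : List ℕ, IsYam u ∧ 0 ∉ u ∧ content u = ν ∧ IsRotatedFilling K α ov u.reverse ∧
      ∀ t, IsFirstDescent ν t → u.reverse.getD 0 0 ≤ t + 1 := by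
  induction K with
  | zero =>
    intro α c ν ov h hν
    refine ⟨[], fun k j => by simp, List.not_mem_nil, funext fun j => ?_, ⟨?_, ?_⟩,
      fun t _ => Nat.zero_le _⟩
    · exact (hν.eq_zero_of_le h j.zero_le).symm
    · exact fun i hi => absurd hi i.not_lt_zero
    · exact fun i hi => absurd hi (by simp [h.ov_eq_false i (Nat.zero_le _)])
  | succ K ih =>
    intro α c ν ov h hν
    obtain ⟨t, ht⟩ := hν.exists_isFirstDescent h K.succ_pos
    obtain ⟨ν', hν', hstrip, hlt, hpeel⟩ := exists_peel h hν ht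
    obtain ⟨u, hu, hu0, rfl, hfill, hfirst⟩ := ih h.tail hν'
    obtain ⟨y, hy, hy0, rfl⟩ := exists_pairwise_ge_content_append_eq (fun j => (hstrip j).1)
      fun j => hν.eq_zero_of_le h
    have hlen : y.reverse.length = α 0 :=
      List.length_reverse.trans (length_eq_of_isAdmissible_append h hy0 hν' hν)
    have hsorted : y.reverse.Pairwise (· ≤ ·) := List.pairwise_reverse.2 hy
    have hmem : ∀ j, content u j < content (u ++ y) j → j + 1 ∈ y.reverse := fun j hj =>
      List.mem_reverse.2 (succ_mem_of_content_lt_content_append hj)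
    refine ⟨u ++ y, isYam_append_of_isHorizontalStrip hu hstrip, ?_, rfl, ?_, fun s hs => ?_⟩
    · exact fun hmem => (List.mem_append.1 hmem).elim hu0 hy0
    · rw [List.reverse_append]
      refine hfill.append h hsorted hlen fun hov => ?_
      obtain ⟨t', ht'⟩ := hν'.exists_isFirstDescent h.tail (Nat.lt_of_succ_lt_succ (h.lt_of_ov hov))
      obtain ⟨k, hk, hkmem⟩ := hpeel hov t' ht'
      have hlast := le_getD_length_sub_one_of_mem hsorted (hmem k hkmem)
      have hhead := hfirst t' ht'
      omega
    · have hα0 := h.two_le 0 K.succ_pos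
      rw [List.reverse_append, List.getD_append _ _ _ _ (by omega), hs.unique ht]
      exact getD_zero_le_of_mem hsorted (hmem t hlt)

/-! ### Row data of the ribbon as sequences -/

theorem sum_take_eq_sum_range_getD (l : List ℕ) (m : ℕ) :
    (l.take m).sum = ∑ j ∈ Finset.range m, l.getD j 0 := by
  induction m with
  | zero => rfl
  | succ m ih =>
    rw [Finset.sum_range_succ, ← ih]
    rcases lt_or_ge m l.length with hm | hm
    · rw [List.sum_take_succ _ _ hm, List.getD_eq_getElem _ _ hm]
    · rw [List.getD_eq_default _ _ hm, List.take_of_length_le hm, List.take_of_length_le (by omega),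
        add_zero]

theorem sum_range_getD_of_length_le {l : List ℕ} {m : ℕ} (hm : l.length ≤ m) :
    ∑ j ∈ Finset.range m, l.getD j 0 = l.sum := by
  rw [← sum_take_eq_sum_range_getD, List.take_of_length_le hm]

theorem sum_range_getD_le_sum (l : List ℕ) (m : ℕ) : ∑ j ∈ Finset.range m, l.getD j 0 ≤ l.sum := by
  rw [← sum_take_eq_sum_range_getD, ← List.sum_take_add_sum_drop l m]
  exact Nat.le_add_right _ _

theorem antitone_getD {l : List ℕ} (hl : l.Pairwise (· ≥ ·)) : Antitone (l.getD · 0) := by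
  refine antitone_nat_of_succ_le fun j => ?_
  rcases lt_or_ge (j + 1) l.length with hj | hj
  · rw [List.getD_eq_getElem _ _ hj, List.getD_eq_getElem _ _ (by omega)]
    exact List.pairwise_iff_getElem.1 hl _ _ _ _ j.lt_succ_self
  · rw [List.getD_eq_default _ _ hj]
    exact Nat.zero_le _

theorem sum_drop_eq_getD_add (l : List ℕ) (i : ℕ) :
    (l.drop i).sum = l.getD i 0 + (l.drop (i + 1)).sum := by
  have hi := List.sum_take_add_sum_drop l i
  have hi' := List.sum_take_add_sum_drop l (i + 1)
  rw [sum_take_eq_sum_range_getD] at hi hi'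
  rw [Finset.sum_range_succ] at hi'
  omega

/-- The number of columns occupied by the rows `i, i + 1, …` of the ribbon `R_a^p`. -/
def numCols (a p : List ℕ) (i : ℕ) : ℕ := (a.drop i).sum - p.getD i 0

section Overlap

variable {a p : List ℕ}

theorem IsOverlapSeq.getD_eq_zero (hp : IsOverlapSeq a p) {i : ℕ} (hi : a.length ≤ i + 1) :
    p.getD i 0 = 0 := by
  rcases hi.lt_or_eq with hlt | heq
  · exact List.getD_eq_default _ _ (hp.1.trans_le (Nat.le_of_lt_succ hlt))
  · rw [show i = a.length - 1 by omega]
    exact hp.2.1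

theorem IsOverlapSeq.getD_eq_succ_or (hp : IsOverlapSeq a p) (i : ℕ) :
    p.getD i 0 = p.getD (i + 1) 0 ∨ p.getD i 0 = p.getD (i + 1) 0 + 1 := by
  rcases lt_or_ge (i + 1) a.length with hi | hi
  · exact hp.2.2 i hi
  · exact Or.inl ((hp.getD_eq_zero hi).trans (hp.getD_eq_zero (hi.trans (i + 1).le_succ)).symm)

theorem IsOverlapSeq.antitone_getD (hp : IsOverlapSeq a p) : Antitone (p.getD · 0) :=
  antitone_nat_of_succ_le fun i => by
    have hi := hp.getD_eq_succ_or i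
    omega

theorem IsOverlapSeq.getD_eq_getD_add_toNat (hp : IsOverlapSeq a p) (i : ℕ) :
    p.getD i 0 = p.getD (i + 1) 0 + (ovOf p i).toNat := by
  rcases hp.getD_eq_succ_or i with hi | hi
  · simp [ovOf, hi, -List.getD_eq_getElem?_getD]
  · simp [ovOf, hi, -List.getD_eq_getElem?_getD]

theorem IsOverlapSeq.getD_le_length_sub (hp : IsOverlapSeq a p) (i : ℕ) :
    p.getD i 0 ≤ a.length - i := by
  rcases le_total a.length i with hi | hi
  · exact (hp.getD_eq_zero (hi.trans i.le_succ)).trans_le (Nat.zero_le _)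
  · induction hi using Nat.decreasingInduction with
    | self => exact (hp.getD_eq_zero (Nat.le_succ _)).trans_le (Nat.zero_le _)
    | of_succ i hi ih =>
      have hstep := hp.getD_eq_succ_or i
      omega

theorem IsOverlapSeq.getD_le_sum_drop (hp : IsOverlapSeq a p) (ha : PartsGE a 1) (i : ℕ) :
    p.getD i 0 ≤ (a.drop i).sum := by
  refine (hp.getD_le_length_sub i).trans ?_
  rw [← List.length_drop]
  simpa only [nsmul_one, Nat.cast_id] using
    List.card_nsmul_le_sum (a.drop i) 1 fun x hx => ha x (List.mem_of_mem_drop hx)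

theorem isRibbonShape_of_isOverlapSeq (ha : IsPartition a) (h2 : PartsGE a 2)
    (hp : IsOverlapSeq a p) :
    IsRibbonShape a.length (a.getD · 0) (ovOf p) (numCols a p) where
  antitone := antitone_getD ha.1
  two_le i hi := by
    rw [List.getD_eq_getElem _ _ hi]
    exact h2 _ (List.getElem_mem hi)
  row_eq_zero i hi := List.getD_eq_default _ _ hi
  ov_eq_false i hi := by
    simp [ovOf, hp.getD_eq_zero hi, -List.getD_eq_getElem?_getD]
  cols_eq_zero i hi := by
    rw [numCols, List.drop_of_length_le hi, List.sum_nil, Nat.zero_sub]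
  cols_add i := by
    have hle := hp.getD_le_sum_drop ha.2 i
    have hle' := hp.getD_le_sum_drop ha.2 (i + 1)
    have hov := hp.getD_eq_getD_add_toNat i
    have hdrop := sum_drop_eq_getD_add a i
    simp only [numCols]
    omega

end Overlap

/-! ### The Schur support -/

section Sufficiency

variable {a p nu w r : List ℕ}

theorem isAdmissible_of_domLE (hnu : nu.Pairwise (· ≥ ·)) (hdom : DomLE a nu)
    (hcols : ∀ i, nu.getD i 0 ≤ numCols a p i) :
    IsAdmissible a.length (a.getD · 0) (numCols a p) (nu.getD · 0) := by
  have hpartial : ∀ m, ∑ j ∈ Finset.range m, a.getD j 0 ≤ ∑ j ∈ Finset.range m, nu.getD j 0 :=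
    fun m => by
      rw [← sum_take_eq_sum_range_getD, ← sum_take_eq_sum_range_getD]
      exact hdom.2 m
  refine ⟨antitone_getD hnu, hcols, hpartial, le_antisymm ?_ (hpartial _)⟩
  rw [sum_range_getD_of_length_le le_rfl, hdom.1]
  exact sum_range_getD_le_sum nu _

theorem mem_relPositions {R : ℕ → ℕ → Prop} [DecidableRel R] {k : ℕ} :
    k ∈ relPositions R w ↔ k < w.length - 1 ∧ R (w.getD k 0) (w.getD (k + 1) 0) := by
  rw [relPositions, Finset.mem_filter, Finset.mem_range]

theorem isRibbonWord_of_isRotatedFilling {ov : ℕ → Bool} (ha : PartsGE a 1)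
    (hw : w.length = a.sum) (hr : r.length = a.sum)
    (hasc : relPositions (· < ·) w = relPositions (· > ·) r)
    (hfill : IsRotatedFilling a.length (a.getD · 0) ov r) : IsRibbonWord a ov w := by
  have hsum : ∀ i, ∑ k ∈ Finset.range i, a.getD k 0 + a.getD i 0 ≤ a.sum := fun i => by
    rw [← Finset.sum_range_succ (a.getD · 0)]
    exact sum_range_getD_le_sum a _
  refine ⟨hw, fun i j hi hj => ?_, fun i hi hov => ?_⟩
  · rw [rowOffset, sum_take_eq_sum_range_getD]
    by_contra! hlt
    have hsumi := hsum i
    have hmem : _ ∈ relPositions (· < ·) w := mem_relPositions.2 ⟨by omega, hlt⟩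
    rw [hasc] at hmem
    exact (hfill.row_le i hi j hj).not_gt (mem_relPositions.1 hmem).2
  · have hlt := hfill.lt_of_ov i hov
    have hsumi := hsum (i + 1)
    have hpos : 1 ≤ a.getD (i + 1) 0 := by
      rw [List.getD_eq_getElem _ _ hi]
      exact ha _ (List.getElem_mem hi)
    rw [rowOffset, sum_take_eq_sum_range_getD]
    obtain ⟨s, hs⟩ : ∃ s, ∑ k ∈ Finset.range (i + 1), a.getD k 0 = s + 1 :=
      Nat.exists_eq_succ_of_ne_zero fun h0 => hlt.ne (by rw [h0])
    rw [hs, Nat.add_sub_cancel] at hlt ⊢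
    have hmem : s ∈ relPositions (· > ·) r := mem_relPositions.2 ⟨by omega, hlt⟩
    rw [← hasc] at hmem
    exact (mem_relPositions.1 hmem).2

theorem inSupport_of_domLE (ha : IsPartition a) (h2 : PartsGE a 2) (hp : IsOverlapSeq a p)
    (hnu : nu.Pairwise (· ≥ ·)) (hdom : DomLE a nu)
    (hcols : ∀ i, nu.getD i 0 ≤ numCols a p i) : InSupport a p nu := by
  have h := isRibbonShape_of_isOverlapSeq ha h2 hp
  have hν := isAdmissible_of_domLE hnu hdom hcols
  obtain ⟨u, hu, h0, hcont, hfill, -⟩ := exists_isRotatedFilling h hν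
  obtain ⟨w, hw, hperm, hasc⟩ := exists_isYam_perm_ascents_eq_descents_reverse hu h0
  have hlen : u.length = a.sum := by
    rw [length_eq_sum_content h0 fun j hj => by rw [hcont]; exact hν.eq_zero_of_le h hj, hcont,
      hν.sum_eq, sum_range_getD_of_length_le le_rfl]
  refine ⟨w, isRibbonWord_of_isRotatedFilling ha.2 (hperm.length_eq.trans hlen)
    (List.length_reverse.trans hlen) hasc hfill, hw, fun j => ?_, ?_⟩
  · exact congrFun ((content_congr hperm).trans hcont) j
  · rw [hperm.count_eq, List.count_eq_zero.2 h0]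

end Sufficiency

section Necessity

variable {a p nu w : List ℕ} {ov : ℕ → Bool}

theorem IsYam.getD_le {k b : ℕ} (hw : IsYam w) (hb : ∀ j < k, w.getD j 0 ≤ b) :
    w.getD k 0 ≤ b + 1 := by
  by_contra! hlt
  have hk : k < w.length := by
    by_contra! hk
    rw [List.getD_eq_default _ _ hk] at hlt
    omega
  obtain ⟨d, hd⟩ : ∃ d, w.getD k 0 = d + 2 := ⟨w.getD k 0 - 2, by omega⟩
  have hmem : d + 2 ∈ w.take (k + 1) :=
    List.mem_take_iff_getElem.2 ⟨k, by omega, by rw [← hd, List.getD_eq_getElem _ _ hk]⟩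
  have hmem' : d + 1 ∈ w.take (k + 1) :=
    List.count_pos_iff.1 ((List.count_pos_iff.2 hmem).trans_le (hw (k + 1) d))
  obtain ⟨j, hj, hjd⟩ := List.mem_take_iff_getElem.1 hmem'
  rw [← List.getD_eq_getElem _ 0] at hjd
  rcases Nat.lt_succ_iff_lt_or_eq.1 (lt_min_iff.1 hj).1 with hjk | rfl
  · have hjb := hb j hjk
    omega
  · omega

theorem IsRibbonWord.getD_row_le (hw : IsRibbonWord a ov w) {i j : ℕ} (hj : j < a.getD i 0) :
    w.getD (rowOffset a i + j) 0 ≤ w.getD (rowOffset a i) 0 := by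
  have hi : i < a.length := by
    by_contra! hi
    rw [List.getD_eq_default _ _ hi] at hj
    exact j.not_lt_zero hj
  induction j with
  | zero => exact le_rfl
  | succ j ih => exact (hw.2.1 i j hi hj).trans (ih (by omega))

theorem rowOffset_succ (a : List ℕ) (i : ℕ) : rowOffset a (i + 1) = rowOffset a i + a.getD i 0 := by
  rw [rowOffset, rowOffset, sum_take_eq_sum_range_getD, Finset.sum_range_succ,
    sum_take_eq_sum_range_getD]

theorem rowOffset_le_sum (a : List ℕ) (i : ℕ) : rowOffset a i ≤ a.sum := by
  rw [rowOffset, sum_take_eq_sum_range_getD]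
  exact sum_range_getD_le_sum a i

theorem IsRibbonWord.getD_le (hw : IsRibbonWord a ov w) (hy : IsYam w) (i : ℕ) :
    ∀ k < rowOffset a i, w.getD k 0 ≤ i := by
  induction i with
  | zero => exact fun k hk => absurd hk k.not_lt_zero
  | succ i ih =>
    intro k hk
    rcases lt_or_ge k (rowOffset a i) with hlt | hge
    · exact (ih k hlt).trans i.le_succ
    · obtain ⟨j, rfl⟩ := Nat.exists_eq_add_of_le hge
      rw [rowOffset_succ] at hk
      exact (hw.getD_row_le (Nat.lt_of_add_lt_add_left hk)).trans (hy.getD_le ih)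

theorem IsRibbonWord.le_of_mem_take (hw : IsRibbonWord a ov w) (hy : IsYam w) {i b : ℕ}
    (hb : b ∈ w.take (rowOffset a i)) : b ≤ i := by
  obtain ⟨k, hk, rfl⟩ := List.mem_take_iff_getElem.1 hb
  rw [← List.getD_eq_getElem _ 0]
  exact hw.getD_le hy i k (lt_min_iff.1 hk).1

theorem IsRibbonWord.rowOffset_le_sum_content (hw : IsRibbonWord a ov w) (hy : IsYam w)
    (h0 : 0 ∉ w) (m : ℕ) : rowOffset a m ≤ ∑ j ∈ Finset.range m, content w j := by
  have hlen : (w.take (rowOffset a m)).length = rowOffset a m := by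
    rw [List.length_take, hw.1, min_eq_left (rowOffset_le_sum a m)]
  rw [← hlen, length_eq_sum_content (M := m) (fun hmem => h0 (List.mem_of_mem_take hmem))
    fun j hj => List.count_eq_zero.2 fun hmem => (hw.le_of_mem_take hy hmem).not_gt (by omega)]
  exact Finset.sum_le_sum fun j _ => (List.take_sublist _ _).count_le _

theorem domLE_of_inSupportOv (h : InSupportOv a ov nu) : DomLE a nu := by
  obtain ⟨w, hw, hy, hcont, hcont0⟩ := h
  have h0 : 0 ∉ w := List.count_eq_zero.1 hcont0
  have hν : content w = (nu.getD · 0) := funext hcont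
  refine ⟨?_, fun m => ?_⟩
  · rw [← hw.1, ← sum_range_getD_of_length_le le_rfl, ← hν]
    exact length_eq_sum_content h0 fun j hj => (hcont j).trans (List.getD_eq_default _ _ hj)
  · rw [sum_take_eq_sum_range_getD nu, ← hν]
    exact hw.rowOffset_le_sum_content hy h0 m

theorem count_add_ite_add_ite_le {x : List ℕ} (b : ℕ) (hx : 2 ≤ x.length) :
    x.count b + (if x.getD 0 0 = b then 0 else 1) + (if x.getD (x.length - 1) 0 = b then 0 else 1)
      ≤ x.length := by
  obtain ⟨h, y, rfl⟩ := List.exists_cons_of_length_pos (by omega : 0 < x.length)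
  rcases List.eq_nil_or_concat y with rfl | ⟨z, l, rfl⟩
  · simp at hx
  · have hz := List.count_le_length (a := b) (l := z)
    have hlast : (h :: (z ++ [l])).getD ((h :: (z ++ [l])).length - 1) 0 = l := by simp
    rw [List.concat_eq_append, hlast, List.getD_cons_zero, List.count_cons, List.count_append,
      List.count_singleton]
    simp only [beq_iff_eq, List.length_cons, List.length_append, List.length_nil]
    split_ifs <;> omega

theorem count_drop_add_ite_add_ite_le (b : ℕ) {s m : ℕ} (hm : 2 ≤ m) (hs : s + m ≤ w.length) :
    (w.drop s).count b + (if w.getD s 0 = b then 0 else 1) +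
      (if w.getD (s + m - 1) 0 = b then 0 else 1) ≤ (w.drop (s + m)).count b + m := by
  set x := (w.drop s).take m with hx
  have hxlen : x.length = m := by
    rw [hx, List.length_take, List.length_drop]
    omega
  have hxget : ∀ j < m, x.getD j 0 = w.getD (s + j) 0 := fun j hj => by
    rw [List.getD_eq_getElem _ _ (by omega), List.getD_eq_getElem _ _ (by omega),
      List.getElem_take, List.getElem_drop]
  have hsplit : (w.drop s).count b = x.count b + (w.drop (s + m)).count b := by
    rw [← List.drop_drop, ← List.count_append, List.take_append_drop]
  have hblock := count_add_ite_add_ite_le b (hm.trans_eq hxlen.symm)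
  rw [hxlen, hxget 0 (by omega), hxget _ (by omega), add_zero, ← Nat.add_sub_assoc (by omega)]
    at hblock
  omega

end Necessity

section Columns

variable {a p nu w : List ℕ} {ov : ℕ → Bool} {c : ℕ → ℕ}

-- A column shared by the rows `q` and `q + 1` contains `b` at most once, so a row not starting
-- with `b` leaves one of the columns from row `q` on without a `b`.
theorem IsRibbonWord.count_drop_add_ite_le (h : IsRibbonShape a.length (a.getD · 0) ov c)
    (hw : IsRibbonWord a ov w) (b : ℕ) {q : ℕ} (hq : q ≤ a.length) :
    (w.drop (rowOffset a q)).count b +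
      (if a.length ≤ q ∨ w.getD (rowOffset a q) 0 = b then 0 else 1) ≤ c q := by
  induction hq using Nat.decreasingInduction with
  | self =>
    have hnil : w.drop (rowOffset a a.length) = [] := by
      rw [rowOffset, List.take_length, ← hw.1, List.drop_length]
    simp [hnil]
  | of_succ q hq ih =>
    have hend : rowOffset a q + a.getD q 0 ≤ w.length := by
      rw [← rowOffset_succ, hw.1]
      exact rowOffset_le_sum a _
    have hrow := count_drop_add_ite_add_ite_le b (h.two_le q hq) hend
    have hcols := h.cols_add q
    rw [← rowOffset_succ] at hrow
    cases hov : ov q with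
    | false =>
      rw [hov, Bool.toNat_false] at hcols
      split_ifs at hrow ih ⊢ <;> omega
    | true =>
      have hlt : q + 1 < a.length := by
        by_contra! hge
        exact Bool.false_ne_true ((h.ov_eq_false q hge).symm.trans hov)
      have hgap := hw.2.2 q hlt hov
      rw [hov, Bool.toNat_true] at hcols
      split_ifs at hrow ih ⊢ <;> omega

theorem getD_le_of_inSupportOv (h : IsRibbonShape a.length (a.getD · 0) ov c)
    (hnu : InSupportOv a ov nu) (i : ℕ) : nu.getD i 0 ≤ c i := by
  obtain ⟨w, hw, hy, hcont, -⟩ := hnu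
  have htake : (w.take (rowOffset a i)).count (i + 1) = 0 :=
    List.count_eq_zero.2 fun hmem => (hw.le_of_mem_take hy hmem).not_gt i.lt_succ_self
  have hcount : nu.getD i 0 = (w.drop (rowOffset a i)).count (i + 1) := by
    rw [← hcont, ← List.take_append_drop (rowOffset a i) w, List.count_append, htake, zero_add,
      List.take_append_drop]
  rw [hcount]
  rcases le_total i a.length with hi | hi
  · exact (Nat.le_add_right _ _).trans (hw.count_drop_add_ite_le h (i + 1) hi)
  · have hnil : w.drop (rowOffset a i) = [] := by
      rw [rowOffset, List.take_of_length_le hi, ← hw.1, List.drop_length]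
    rw [hnil, List.count_nil]
    exact Nat.zero_le _

theorem inSupport_iff (ha : IsPartition a) (h2 : PartsGE a 2) (hp : IsOverlapSeq a p)
    (hnu : nu.Pairwise (· ≥ ·)) :
    InSupport a p nu ↔ DomLE a nu ∧ ∀ i, nu.getD i 0 ≤ numCols a p i :=
  ⟨fun h => ⟨domLE_of_inSupportOv h,
      getD_le_of_inSupportOv (isRibbonShape_of_isOverlapSeq ha h2 hp) h⟩,
    fun h => inSupport_of_domLE ha h2 hp hnu h.1 h.2⟩

theorem inInterval_iff (hp : p.getD 0 0 ≤ a.sum) :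
    InInterval a p nu ↔ DomLE a nu ∧ nu.getD 0 0 ≤ numCols a p 0 := by
  refine and_congr_right fun hdom => ?_
  have hnusum := hdom.1
  rw [numCols, List.drop_zero]
  constructor
  · intro h
    have h1 := h.2 1
    rw [sum_take_eq_sum_range_getD, sum_take_eq_sum_range_getD, Finset.sum_range_one,
      Finset.sum_range_one] at h1
    exact h1
  · refine fun h => ⟨by simp only [List.sum_cons, List.sum_nil]; omega, fun m => ?_⟩
    match m with
    | 0 => exact le_rfl
    | 1 =>
      rw [sum_take_eq_sum_range_getD, Finset.sum_range_one]
      simpa using h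
    | m + 2 =>
      have hle := (nu.take_sublist (m + 2)).sum_le_sum fun _ _ => Nat.zero_le _
      simp only [List.take_succ_cons, List.take_nil, List.sum_cons, List.sum_nil]
      omega

end Columns

section FilterNeZero

variable {l : List ℕ}

theorem getD_filter_ne_zero (hl : Antitone (l.getD · 0)) (i : ℕ) :
    (l.filter (· ≠ 0)).getD i 0 = l.getD i 0 := by
  induction l generalizing i with
  | nil => rfl
  | cons x l ih =>
    have ih := ih fun i j hij => hl (Nat.succ_le_succ hij)
    by_cases hx : x = 0
    · have hzero : ∀ j, (x :: l).getD j 0 = 0 := fun j =>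
        Nat.le_zero.1 ((hl j.zero_le).trans_eq hx)
      rw [List.filter_cons_of_neg (by simpa using hx), ih, hzero i]
      exact hzero (i + 1)
    · rw [List.filter_cons_of_pos (by simpa using hx)]
      cases i with
      | zero => rfl
      | succ i => exact ih i

theorem lt_lenp_iff (hl : Antitone (l.getD · 0)) {i : ℕ} : i < lenp l ↔ 0 < l.getD i 0 := by
  rw [← getD_filter_ne_zero hl, lenp, List.countP_eq_length_filter]
  constructor
  · intro hi
    rw [List.getD_eq_getElem _ _ hi, Nat.pos_iff_ne_zero]
    simpa using List.of_mem_filter (List.getElem_mem hi)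
  · intro hpos
    by_contra! hi
    exact hpos.ne' (List.getD_eq_default _ _ hi)

theorem isPartition_filter_ne_zero (hl : l.Pairwise (· ≥ ·)) : IsPartition (l.filter (· ≠ 0)) :=
  ⟨hl.filter _, fun x hx => Nat.pos_of_ne_zero (by simpa using List.of_mem_filter hx)⟩

theorem inSupport_filter_ne_zero {a p : List ℕ} (hl : l.Pairwise (· ≥ ·)) :
    InSupport a p (l.filter (· ≠ 0)) ↔ InSupport a p l := by
  simp only [InSupport, InSupportOv, HasContent, getD_filter_ne_zero (antitone_getD hl)]

theorem inInterval_filter_ne_zero {a p : List ℕ} (hl : l.Pairwise (· ≥ ·)) :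
    InInterval a p (l.filter (· ≠ 0)) ↔ InInterval a p l := by
  have htake : ∀ m, ((l.filter (· ≠ 0)).take m).sum = (l.take m).sum := fun m => by
    simp only [sum_take_eq_sum_range_getD, getD_filter_ne_zero (antitone_getD hl)]
  have hsum : (l.filter (· ≠ 0)).sum = l.sum := by
    simpa only [bne, beq_eq_decide, ne_eq, decide_not] using List.sum_filter_bne_zero l
  simp only [InInterval, DomLE, htake, hsum]

end FilterNeZero

/-! ### Witnesses -/

/-- The parts `a_j + g̃_j` for `j ≤ i`, then `ϱ_i` and what the `i`-witness vector leaves of its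
slack; the last entry is meaningful only if that vector fits its slack. -/
def witnessList (a p : List ℕ) (i : ℕ) : List ℕ :=
  ((List.range i).map fun j => a.getD j 0 + wit a p i (j + 1)) ++
    [rho a p i, p.getD i 0 - 1 - witSize a p i]

section Witness

variable {a p nu : List ℕ} {i : ℕ}

theorem getD_add_wit (a p : List ℕ) (i j : ℕ) :
    a.getD j 0 + wit a p i (j + 1) = max (a.getD j 0) (rho a p i) := by
  rw [wit, Nat.add_sub_cancel]
  omega

theorem sum_range_add_witSize (a p : List ℕ) (i : ℕ) :
    ∑ j ∈ Finset.range i, a.getD j 0 + witSize a p i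
      = ∑ j ∈ Finset.range i, max (a.getD j 0) (rho a p i) := by
  rw [witSize, ← Finset.Ico_add_one_right_eq_Icc, Finset.sum_Ico_eq_sum_range,
    Nat.add_sub_cancel, ← Finset.sum_add_distrib]
  exact Finset.sum_congr rfl fun j _ => by rw [add_comm 1 j, getD_add_wit]

theorem sum_range_max_le {f g : ℕ → ℕ} {r i : ℕ} (hf : Antitone f)
    (hle : ∀ m, ∑ j ∈ Finset.range m, f j ≤ ∑ j ∈ Finset.range m, g j) (hr : ∀ j < i, r ≤ g j) :
    ∑ j ∈ Finset.range i, max (f j) r ≤ ∑ j ∈ Finset.range i, g j := by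
  induction i with
  | zero => exact le_rfl
  | succ i ih =>
    rcases le_total r (f i) with hi | hi
    · refine (Finset.sum_le_sum fun j hj => ?_).trans (hle (i + 1))
      exact max_le le_rfl (hi.trans (hf (Nat.le_of_lt_succ (Finset.mem_range.1 hj))))
    · rw [Finset.sum_range_succ, Finset.sum_range_succ, max_eq_right hi]
      exact add_le_add (ih fun j hj => hr j (hj.trans i.lt_succ_self)) (hr i i.lt_succ_self)

theorem IsOverlapSeq.rho_eq (hp : IsOverlapSeq a p) (ha : PartsGE a 1) (i : ℕ) :
    rho a p i = numCols a p i + 1 :=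
  Nat.sub_add_comm (hp.getD_le_sum_drop ha i)

theorem IsOverlapSeq.sum_take_add_rho (hp : IsOverlapSeq a p) (ha : PartsGE a 1) (i : ℕ) :
    ∑ j ∈ Finset.range i, a.getD j 0 + rho a p i + p.getD i 0 = a.sum + 1 := by
  have hle := hp.getD_le_sum_drop ha i
  have hsum := List.sum_take_add_sum_drop a i
  rw [sum_take_eq_sum_range_getD] at hsum
  rw [rho]
  omega

theorem exists_witSize_lt_of_not_inSupport (ha : IsPartition a) (h2 : PartsGE a 2)
    (hp : IsOverlapSeq a p) (hnu : nu.Pairwise (· ≥ ·)) (hint : InInterval a p nu)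
    (hsupp : ¬ InSupport a p nu) : ∃ i, 1 ≤ i ∧ witSize a p i < p.getD i 0 := by
  have hp0 : p.getD 0 0 ≤ a.sum := hp.getD_le_sum_drop ha.2 0
  obtain ⟨hdom, hhead⟩ := (inInterval_iff hp0).1 hint
  obtain ⟨i, hi⟩ : ∃ i, numCols a p i < nu.getD i 0 := by
    by_contra! hcols
    exact hsupp (inSupport_of_domLE ha h2 hp hnu hdom hcols)
  refine ⟨i, Nat.one_le_iff_ne_zero.2 fun h0 => ?_, ?_⟩
  · subst h0
    exact hhead.not_gt hi
  have hrho : rho a p i ≤ nu.getD i 0 := (hp.rho_eq ha.2 i).trans_le hi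
  have hmax : ∑ j ∈ Finset.range i, max (a.getD j 0) (rho a p i)
      ≤ ∑ j ∈ Finset.range i, nu.getD j 0 :=
    sum_range_max_le (antitone_getD ha.1)
      (fun m => by simpa only [sum_take_eq_sum_range_getD] using hdom.2 m)
      fun j hj => hrho.trans (antitone_getD hnu hj.le)
  have htotal := sum_range_getD_le_sum nu (i + 1)
  rw [Finset.sum_range_succ, ← hdom.1] at htotal
  have hsize := sum_range_add_witSize a p i
  have hsum := hp.sum_take_add_rho ha.2 i
  omega

theorem slack_lt_rho (ha : IsPartition a) (h2 : PartsGE a 2) (hp : IsOverlapSeq a p) (i : ℕ) :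
    p.getD i 0 < rho a p i := by
  have hcols := (isRibbonShape_of_isOverlapSeq ha h2 hp).sub_le_cols i
  have hlen := hp.getD_le_length_sub i
  rw [hp.rho_eq ha.2]
  omega

theorem length_witnessList : (witnessList a p i).length = i + 2 := by
  simp [witnessList]

theorem getD_witnessList_of_lt {j : ℕ} (hj : j < i) :
    (witnessList a p i).getD j 0 = max (a.getD j 0) (rho a p i) := by
  rw [witnessList, List.getD_append _ _ _ _ (by simpa using hj), ← getD_add_wit,
    List.getD_eq_getElem _ _ (by simpa using hj), List.getElem_map, List.getElem_range]

theorem getD_witnessList_self : (witnessList a p i).getD i 0 = rho a p i := by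
  rw [witnessList, List.getD_append_right _ _ _ _ (by simp)]
  simp

theorem sum_witnessList (ha : PartsGE a 1) (hp : IsOverlapSeq a p)
    (hfit : witSize a p i < p.getD i 0) : (witnessList a p i).sum = a.sum := by
  have hsize := sum_range_add_witSize a p i
  have hsum := hp.sum_take_add_rho ha i
  simp only [witnessList, List.sum_append, List.sum_cons, List.sum_nil, getD_add_wit]
  rw [← List.sum_toFinset _ List.nodup_range, List.toFinset_range]
  omega

theorem pairwise_witnessList (ha : IsPartition a) (h2 : PartsGE a 2) (hp : IsOverlapSeq a p)
    (i : ℕ) : (witnessList a p i).Pairwise (· ≥ ·) := by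
  have hrho := slack_lt_rho ha h2 hp i
  simp only [witnessList, getD_add_wit, List.pairwise_append]
  refine ⟨?_, ?_, ?_⟩
  · rw [List.pairwise_map]
    exact List.pairwise_lt_range.imp fun hjk => max_le_max (antitone_getD ha.1 hjk.le) le_rfl
  · rw [List.pairwise_pair]
    omega
  · simp only [List.mem_map, List.mem_cons, List.not_mem_nil, or_false, forall_exists_index,
      and_imp]
    rintro _ j - rfl y hy
    refine le_trans ?_ (le_max_right _ _)
    omega

theorem domLE_witnessList (ha : IsPartition a) (h2 : PartsGE a 2) (hp : IsOverlapSeq a p)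
    (hfit : witSize a p i < p.getD i 0) : DomLE a (witnessList a p i) := by
  have hsum := sum_witnessList ha.2 hp hfit
  refine ⟨hsum.symm, fun m => ?_⟩
  rw [sum_take_eq_sum_range_getD, sum_take_eq_sum_range_getD]
  have hmax : ∀ m ≤ i, ∑ j ∈ Finset.range m, a.getD j 0
      ≤ ∑ j ∈ Finset.range m, (witnessList a p i).getD j 0 := fun m hm =>
    Finset.sum_le_sum fun j hj => by
      rw [getD_witnessList_of_lt ((Finset.mem_range.1 hj).trans_le hm)]
      exact le_max_left _ _
  rcases lt_trichotomy m (i + 1) with hm | rfl | hm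
  · exact hmax m (Nat.le_of_lt_succ hm)
  · rw [Finset.sum_range_succ, Finset.sum_range_succ, getD_witnessList_self, hp.rho_eq ha.2]
    exact add_le_add (hmax i le_rfl)
      (((isRibbonShape_of_isOverlapSeq ha h2 hp).row_le_cols i).trans (Nat.le_succ _))
  · rw [sum_range_getD_of_length_le (l := witnessList a p i), hsum]
    · exact sum_range_getD_le_sum a m
    · exact length_witnessList.trans_le hm

theorem inInterval_witnessList (ha : IsPartition a) (h2 : PartsGE a 2) (hp : IsOverlapSeq a p)
    (hi : 1 ≤ i) (hfit : witSize a p i < p.getD i 0) : InInterval a p (witnessList a p i) := by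
  have hp0 : p.getD 0 0 ≤ a.sum := hp.getD_le_sum_drop ha.2 0
  have h := isRibbonShape_of_isOverlapSeq ha h2 hp
  have hlen : 0 < a.length := by
    by_contra! hge
    have hzero := hp.getD_eq_zero (hge.trans (i + 1).zero_le)
    omega
  refine (inInterval_iff hp0).2 ⟨domLE_witnessList ha h2 hp hfit, ?_⟩
  rw [getD_witnessList_of_lt hi, hp.rho_eq ha.2]
  exact max_le (h.row_le_cols 0) ((h.antitone_cols hi).trans_lt (h.cols_succ_lt hlen))

theorem not_inSupport_witnessList (ha : IsPartition a) (h2 : PartsGE a 2)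
    (hp : IsOverlapSeq a p) (i : ℕ) : ¬ InSupport a p (witnessList a p i) := fun hsupp => by
  have hle := getD_le_of_inSupportOv (isRibbonShape_of_isOverlapSeq ha h2 hp) hsupp i
  rw [getD_witnessList_self, hp.rho_eq ha.2] at hle
  exact hle.not_gt (Nat.lt_succ_self _)

end Witness

section Main

variable {a p : List ℕ}

theorem supportSet_subset_intervalSet (ha : IsPartition a) (h2 : PartsGE a 2)
    (hp : IsOverlapSeq a p) : SupportSet a p ⊆ IntervalSet a p := fun nu ⟨hnu, hsupp⟩ => by
  have hp0 : p.getD 0 0 ≤ a.sum := hp.getD_le_sum_drop ha.2 0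
  obtain ⟨hdom, hcols⟩ := (inSupport_iff ha h2 hp hnu.1).1 hsupp
  exact ⟨hnu, (inInterval_iff hp0).2 ⟨hdom, hcols 0⟩⟩

theorem supportSet_ssubset_intervalSet_iff (ha : IsPartition a) (h2 : PartsGE a 2)
    (hp : IsOverlapSeq a p) :
    SupportSet a p ⊂ IntervalSet a p ↔ ∃ i, 1 ≤ i ∧ witSize a p i < p.getD i 0 := by
  constructor
  · intro hss
    obtain ⟨nu, ⟨hnu, hint⟩, hnot⟩ := Set.exists_of_ssubset hss
    exact exists_witSize_lt_of_not_inSupport ha h2 hp hnu.1 hint fun hsupp => hnot ⟨hnu, hsupp⟩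
  · rintro ⟨i, hi, hfit⟩
    have hsorted := pairwise_witnessList ha h2 hp i
    refine (supportSet_subset_intervalSet ha h2 hp).ssubset_of_mem_notMem
      (a := (witnessList a p i).filter (· ≠ 0)) ⟨isPartition_filter_ne_zero hsorted, ?_⟩ ?_
    · exact (inInterval_filter_ne_zero hsorted).2 (inInterval_witnessList ha h2 hp hi hfit)
    · exact fun hmem => not_inSupport_witnessList ha h2 hp i
        ((inSupport_filter_ne_zero hsorted).1 hmem.2)

end Main

/-- Theorem `Tchar`: the Schur support of `R_a^p` is a proper subset of the
Schur interval iff `ℓ(p) ≥ 2` and for some `1 ≤ i ≤ ℓ(p)−1` the `i`-witness vector fits its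
slack, `Σ_{j=1}^i [ϱ_i − a_j]₊ ≤ p_{i+1} − 1`; and in that case
`a_j + g̃ʲ ≥ ϱ_i ≥ p_{i+1}−1−|g̃|` for `j = 1, …, i` and the weakly decreasing rearrangement of
`(a₁+g̃₁, …, a_i+g̃_i, ϱ_i, p_{i+1}−1−|g̃|)` is a partition of `|a|` in the Schur interval
but not in the support. -/
theorem proper_support_iff_witness_fits_slack
    (a p : List ℕ) (ha : IsPartition a) (h2 : PartsGE a 2) (hp : IsOverlapSeq a p) :
    (SupportSet a p ⊂ IntervalSet a p ↔
      (2 ≤ lenp p ∧ ∃ i, 1 ≤ i ∧ i + 1 ≤ lenp p ∧ witSize a p i < p.getD i 0)) ∧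
    (∀ i, 1 ≤ i → i + 1 ≤ lenp p → witSize a p i < p.getD i 0 →
      (∀ j, 1 ≤ j → j ≤ i →
        rho a p i ≤ a.getD (j - 1) 0 + wit a p i j ∧
          p.getD i 0 - 1 - witSize a p i ≤ rho a p i) ∧
      (∀ mu : List ℕ,
        mu.Perm (((List.range i).map fun j => a.getD j 0 + wit a p i (j + 1)) ++
            [rho a p i, p.getD i 0 - 1 - witSize a p i]) →
        mu.Pairwise (· ≥ ·) →
        mu.sum = a.sum ∧ InInterval a p mu ∧ ¬ InSupport a p mu)) := by
  have hanti := hp.antitone_getD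
  refine ⟨(supportSet_ssubset_intervalSet_iff ha h2 hp).trans ?_, ?_⟩
  · constructor
    · rintro ⟨i, hi, hfit⟩
      have hlen := (lt_lenp_iff hanti).2 (Nat.zero_lt_of_lt hfit)
      exact ⟨(Nat.succ_le_succ hi).trans hlen, i, hi, hlen, hfit⟩
    · rintro ⟨-, i, hi, -, hfit⟩
      exact ⟨i, hi, hfit⟩
  · intro i hi _ hfit
    refine ⟨fun _ _ _ => ⟨?_, ?_⟩, fun mu hperm hsorted => ?_⟩
    · exact le_add_tsub
    · have hslack := slack_lt_rho ha h2 hp i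
      omega
    · obtain rfl : mu = witnessList a p i :=
        List.Perm.eq_of_pairwise' hsorted (pairwise_witnessList ha h2 hp i) hperm
      exact ⟨sum_witnessList ha.2 hp hfit, inInterval_witnessList ha h2 hp hi hfit,
        not_inSupport_witnessList ha h2 hp i⟩

end RibbonSupport
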